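/- arXiv:0909.4865 — 2 statements merged into one kernel-verified Lean document; each statement's English description precedes it below -/
import Mathlib

section
/- Let $f(x,y)=\sum_{i=0}^{4}\binom{4}{i}a_i\,x^{4-i}y^i$ be a real binary quartic form with distinct roots, i.e. squarefree over $\mathbb{C}$, which has either no real root or exactly two distinct real roots in $\mathbb{P}^1(\mathbb{R})$. The real rank of $f$ is the least $r$ such that $f=\sum_{j=1}^{r}c_j\ell_j^4$ with $c_j\in\mathbb{R}$ and nonzero real linear forms $\ell_j$. Let $$H_f=\begin{pmatrix}a_0&a_1&a_2\\a_1&a_2&a_3\\a_2&a_3&a_4\end{pmatrix}$$ be the Hankel (catalecticant) matrix of $f$. If $\det H_f\neq 0$ (which holds for general $f$), then the real rank of $f$ is $3$. In the exceptional case $\det H_f=0$, the real rank of $f$ is $2$. -/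
namespace BinaryForm

open MvPolynomial

/-- The real linear binary form `a * x + b * y`. -/
noncomputable def lin (a b : ℝ) : MvPolynomial (Fin 2) ℝ := C a * X 0 + C b * X 1

/-- `f` is a sum of `r` terms `c j * (ℓ j) ^ d` with `ℓ j` nonzero real linear forms. -/
def HasDecomp (f : MvPolynomial (Fin 2) ℝ) (d r : ℕ) : Prop :=
  ∃ c a b : Fin r → ℝ, (∀ j, (a j, b j) ≠ (0, 0)) ∧
    f = ∑ j, C (c j) * lin (a j) (b j) ^ d

/-- The real rank of a binary form `f` of degree `d`: the least `r` such that `f` is a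
real linear combination of `r` many `d`-th powers of real linear forms. -/
noncomputable def realRank (f : MvPolynomial (Fin 2) ℝ) (d : ℕ) : ℕ :=
  sInf {r | HasDecomp f d r}

/-- The set of real projective roots of a binary form (for a homogeneous `f`, vanishing at a
point does not depend on the representative). -/
def projRoots (f : MvPolynomial (Fin 2) ℝ) : Set (Projectivization ℝ (Fin 2 → ℝ)) :=
  {p | eval p.rep f = 0}

/-- `f` has distinct roots: it is squarefree as a complex polynomial. -/
def SquarefreeC (f : MvPolynomial (Fin 2) ℝ) : Prop :=
  Squarefree (MvPolynomial.map (algebraMap ℝ ℂ) f)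

/-- The coefficient `a_i` of a binary form of degree `d` written with binomial weights,
`f = ∑ i, (d.choose i) * a_i * x ^ (d - i) * y ^ i`. -/
noncomputable def weightedCoeff (f : MvPolynomial (Fin 2) ℝ) (d i : ℕ) : ℝ :=
  coeff (Finsupp.single 0 (d - i) + Finsupp.single 1 i) f / (d.choose i : ℝ)

/-- The middle Hankel (catalecticant) matrix `(a_{i+j})`, `0 ≤ i, j ≤ 2`, of a binary quartic. -/
noncomputable def catalecticant (f : MvPolynomial (Fin 2) ℝ) : Matrix (Fin 3) (Fin 3) ℝ :=
  Matrix.of fun i j => weightedCoeff f 4 ((i : ℕ) + (j : ℕ))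

end BinaryForm

/-!
If `f = ∑ⱼ cⱼ ℓⱼ⁴`, the catalecticant of `f` is `Vᵀ * diagonal c * V`, where the rows of the
projective Vandermonde matrix `V` are the quadratic monomials in the coefficients of the `ℓⱼ`.
Hence its rank is at most the number of summands. For three summands its determinant is
`(∏ⱼ cⱼ) (det V)²`, which vanishes only if some `cⱼ` is zero or two of the `ℓⱼ` are proportional;
either way two summands suffice. So everything except the lower bound `2` follows once a quartic is
known to be a combination of three fourth powers.

A squarefree form of degree `d` with at most `d - 2` real roots has a nonreal root, hence a definite
quadratic factor. If `f` is a quartic, diagonalizing this factor and the complementary one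
simultaneously gives `f = (u² + v²) (α u² + β v²)`, where by symmetry `|β| ≤ |α|`. Then
`α u⁴ + (α + β) u² v² + β v⁴` is `α / 2 * ((u + t v)⁴ + (u - t v)⁴)` plus a multiple of `v⁴`,
where `6 α t² = α + β`. A single fourth power does not suffice because its only root is real.
-/

namespace BinaryForm

open MvPolynomial Matrix

theorem eval_lin (v : Fin 2 → ℝ) (a b : ℝ) : eval v (lin a b) = a * v 0 + b * v 1 := by
  simp [lin]

theorem lin_mul_mul (k a b : ℝ) : lin (k * a) (k * b) = C k * lin a b := by
  simp only [lin, C_mul]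
  ring

theorem exists_lin_eq_C_mul_lin {a b a' b' : ℝ} (hab : (a, b) ≠ (0, 0)) (h : b' * a = b * a') :
    ∃ k, lin a' b' = C k * lin a b := by
  suffices ∃ k, a' = k * a ∧ b' = k * b by
    obtain ⟨k, rfl, rfl⟩ := this
    exact ⟨k, lin_mul_mul k a b⟩
  rcases eq_or_ne a 0 with rfl | ha
  · have hb : b ≠ 0 := fun hb => hab (by rw [hb])
    have ha' : a' = 0 := by simpa [hb] using h
    exact ⟨b' / b, by simp [ha'], by field_simp⟩
  · exact ⟨a' / a, by field_simp, by field_simp; linear_combination h⟩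

theorem lin_pow_eq_sum_monomial (a b : ℝ) (d : ℕ) :
    lin a b ^ d = ∑ m ∈ Finset.range (d + 1),
      monomial (Finsupp.single 0 m + Finsupp.single 1 (d - m))
        (a ^ m * b ^ (d - m) * d.choose m) := by
  rw [lin, add_pow]
  refine Finset.sum_congr rfl fun m _ => ?_
  rw [← map_natCast (C : ℝ →+* MvPolynomial (Fin 2) ℝ), monomial_single_add,
    ← mul_one (a ^ m * b ^ (d - m) * (d.choose m : ℝ)), ← C_mul_monomial, ← X_pow_eq_monomial]
  simp only [map_mul, map_pow]
  ring

theorem weightedCoeff_lin_pow (a b : ℝ) {d i : ℕ} (hi : i ≤ d) :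
    weightedCoeff (lin a b ^ d) d i = a ^ (d - i) * b ^ i := by
  have hne : (d.choose i : ℝ) ≠ 0 := by exact_mod_cast (Nat.choose_pos hi).ne'
  rw [weightedCoeff, lin_pow_eq_sum_monomial, coeff_sum, div_eq_iff hne,
    Finset.sum_eq_single_of_mem (d - i) (Finset.mem_range.2 (by omega))]
  · simp [Nat.sub_sub_self hi, Nat.choose_symm hi]
  · intro m _ hm
    rw [coeff_monomial, if_neg]
    exact fun h => hm (by simpa using DFunLike.congr_fun h 0)

theorem weightedCoeff_sum_lin_pow {ι : Type*} [Fintype ι] (c a b : ι → ℝ) {d i : ℕ} (hi : i ≤ d) :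
    weightedCoeff (∑ j, C (c j) * lin (a j) (b j) ^ d) d i =
      ∑ j, c j * (a j ^ (d - i) * b j ^ i) := by
  simp only [← weightedCoeff_lin_pow _ _ hi, weightedCoeff, coeff_sum, coeff_C_mul,
    Finset.sum_div, mul_div_assoc]

theorem catalecticant_sum_lin_pow {ι : Type*} [Fintype ι] [DecidableEq ι] (c a b : ι → ℝ) :
    catalecticant (∑ j, C (c j) * lin (a j) (b j) ^ 4) =
      (rectVandermonde b a 3)ᵀ * diagonal c * rectVandermonde b a 3 := by
  ext i k
  rw [catalecticant, of_apply, weightedCoeff_sum_lin_pow c a b (by omega), mul_apply]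
  refine Finset.sum_congr rfl fun j _ => ?_
  have hexp : 4 - ((i : ℕ) + k) = i.rev + k.rev := by
    simp only [Fin.val_rev]
    omega
  rw [mul_diagonal, transpose_apply, rectVandermonde_apply, rectVandermonde_apply, hexp]
  ring

theorem HasDecomp.rank_catalecticant_le {f : MvPolynomial (Fin 2) ℝ} {r : ℕ}
    (h : HasDecomp f 4 r) : (catalecticant f).rank ≤ r := by
  obtain ⟨c, a, b, -, rfl⟩ := h
  rw [catalecticant_sum_lin_pow]
  exact (rank_mul_le_left _ _).trans ((rank_mul_le_left _ _).trans (rank_le_width _))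

theorem det_catalecticant_sum_lin_pow (c a b : Fin 3 → ℝ) :
    (catalecticant (∑ j, C (c j) * lin (a j) (b j) ^ 4)).det =
      (∏ j, c j) * (projVandermonde b a).det ^ 2 := by
  rw [catalecticant_sum_lin_pow, det_mul, det_mul, det_transpose, det_diagonal, projVandermonde]
  ring

section Reduction

variable {d r : ℕ} {c a b : Fin (r + 1) → ℝ}

theorem hasDecomp_of_coeff_eq_zero (hab : ∀ j, (a j, b j) ≠ (0, 0)) {j : Fin (r + 1)}
    (hj : c j = 0) : HasDecomp (∑ j, C (c j) * lin (a j) (b j) ^ d) d r := by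
  refine ⟨c ∘ j.succAbove, a ∘ j.succAbove, b ∘ j.succAbove, fun i => hab _, ?_⟩
  simp [Fin.sum_univ_succAbove _ j, hj]

theorem hasDecomp_of_proportional (hab : ∀ j, (a j, b j) ≠ (0, 0)) {i j : Fin (r + 1)}
    (hij : i ≠ j) (h : b j * a i = b i * a j) :
    HasDecomp (∑ j, C (c j) * lin (a j) (b j) ^ d) d r := by
  obtain ⟨k, hk⟩ := exists_lin_eq_C_mul_lin (hab i) h
  let c' : Fin (r + 1) → ℝ := c + Pi.single i (c j * k ^ d) - Pi.single j (c j)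
  have hc' : c' j = 0 := by simp [c', hij.symm]
  have hsum : ∑ l, C (c l) * lin (a l) (b l) ^ d = ∑ l, C (c' l) * lin (a l) (b l) ^ d := by
    simp only [c', Pi.sub_apply, Pi.add_apply, Pi.single_apply, C_sub, C_add, apply_ite C, C_mul,
      C_pow, C_0, sub_mul, add_mul, ite_mul, zero_mul, Finset.sum_sub_distrib,
      Finset.sum_add_distrib, Finset.sum_ite_eq', Finset.mem_univ, ↓reduceIte, hk, mul_pow]
    ring
  rw [hsum]
  exact hasDecomp_of_coeff_eq_zero hab hc'

end Reduction

theorem HasDecomp.two_of_det_catalecticant_eq_zero {f : MvPolynomial (Fin 2) ℝ}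
    (h : HasDecomp f 4 3) (hdet : (catalecticant f).det = 0) : HasDecomp f 4 2 := by
  obtain ⟨c, a, b, hab, rfl⟩ := h
  rw [det_catalecticant_sum_lin_pow, mul_eq_zero, Finset.prod_eq_zero_iff,
    pow_eq_zero_iff two_ne_zero, det_projVandermonde] at hdet
  rcases hdet with ⟨j, -, hj⟩ | hV
  · exact hasDecomp_of_coeff_eq_zero hab hj
  · obtain ⟨i, -, hi⟩ := Finset.prod_eq_zero_iff.1 hV
    obtain ⟨j, hj, hij⟩ := Finset.prod_eq_zero_iff.1 hi
    exact hasDecomp_of_proportional hab (Finset.mem_Ioi.1 hj).ne (sub_eq_zero.1 hij)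

section Dehomogenize

variable {R : Type*}

section CommSemiring

variable [CommSemiring R] {f : MvPolynomial (Fin 2) R} {d : ℕ}

/-- The dehomogenization `f(X, 1)` of a binary form `f`, whose roots are the roots of `f` other than
`[1 : 0]`; it reduces questions about binary forms to polynomials in one variable. -/
noncomputable def dehomogenize (f : MvPolynomial (Fin 2) R) : Polynomial R :=
  aeval ![Polynomial.X, 1] f

theorem aeval_dehomogenize {A : Type*} [CommSemiring A] [Algebra R A]
    (f : MvPolynomial (Fin 2) R) (z : A) :
    Polynomial.aeval z (dehomogenize f) = aeval ![z, 1] f := by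
  rw [dehomogenize, ← AlgHom.comp_apply, comp_aeval]
  congr 2
  ext i
  fin_cases i <;> simp

theorem homogenize_dehomogenize (hf : f.IsHomogeneous d) :
    (dehomogenize f).homogenize d = f :=
  Polynomial.homogenize_eq_of_isHomogeneous hf rfl

theorem natDegree_dehomogenize_le (hf : f.IsHomogeneous d) :
    (dehomogenize f).natDegree ≤ d := by
  rw [dehomogenize, aeval_def, eval₂_eq']
  refine Polynomial.natDegree_sum_le_of_forall_le _ _ fun m hm => ?_
  have hdeg : m 0 + m 1 = d := by
    simpa [Finsupp.weight_apply, Finsupp.sum_fintype] using hf (mem_support_iff.1 hm)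
  simp only [Fin.prod_univ_two, cons_val_zero, cons_val_one, one_pow, mul_one,
    Polynomial.algebraMap_eq]
  exact (Polynomial.natDegree_C_mul_X_pow_le _ _).trans (by omega)

theorem homogenize_eq_homogenize_natDegree_mul {P : Polynomial R} (hd : P.natDegree ≤ d) :
    P.homogenize d = P.homogenize P.natDegree * X 1 ^ (d - P.natDegree) := by
  have h := Polynomial.homogenize_mul P 1 le_rfl (n := d - P.natDegree) (by simp)
  rwa [mul_one, Nat.add_sub_cancel' hd, Polynomial.homogenize_one] at h

theorem exists_eval_eq_of_isHomogeneous_two (hf : f.IsHomogeneous 2) :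
    ∃ l m n : R, ∀ v, eval v f = l * v 0 ^ 2 + m * (v 0 * v 1) + n * v 1 ^ 2 := by
  refine ⟨(dehomogenize f).coeff 2, (dehomogenize f).coeff 1, (dehomogenize f).coeff 0,
    fun v => ?_⟩
  conv_lhs => rw [← homogenize_dehomogenize hf]
  simp [Polynomial.homogenize, Finset.Nat.antidiagonal_succ, eval_monomial, Finsupp.prod_fintype]
  ring

end CommSemiring

variable [CommRing R] [IsDomain R] {f : MvPolynomial (Fin 2) R} {d : ℕ}

theorem squarefree_dehomogenize (hf : f.IsHomogeneous d) (hsf : Squarefree f) :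
    Squarefree (dehomogenize f) := by
  intro Q hQ
  have hQ0 : Q ≠ 0 := by
    rintro rfl
    have hP0 : dehomogenize f = 0 := zero_dvd_iff.1 (by simpa using hQ)
    exact hsf.ne_zero (by rw [← homogenize_dehomogenize hf, hP0, Polynomial.homogenize_zero])
  have hdvd : Q.homogenize Q.natDegree * Q.homogenize Q.natDegree ∣ f := by
    rw [← Polynomial.homogenize_mul _ _ le_rfl le_rfl, ← Polynomial.natDegree_mul hQ0 hQ0,
      ← homogenize_dehomogenize hf,
      homogenize_eq_homogenize_natDegree_mul (natDegree_dehomogenize_le hf)]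
    exact (Polynomial.homogenize_dvd hQ).mul_right _
  simpa using (hsf _ hdvd).map (aeval ![Polynomial.X, (1 : Polynomial R)])

theorem le_natDegree_dehomogenize_add_one (hf : f.IsHomogeneous d) (hsf : Squarefree f) :
    d ≤ (dehomogenize f).natDegree + 1 := by
  by_contra! hlt
  have hdvd : (X 1 : MvPolynomial (Fin 2) R) * X 1 ∣ f := by
    rw [← homogenize_dehomogenize hf,
      homogenize_eq_homogenize_natDegree_mul (natDegree_dehomogenize_le hf), ← pow_two]
    exact (pow_dvd_pow _ (by omega)).mul_left _
  exact (X_prime (R := R) (i := (1 : Fin 2))).not_isUnit (hsf _ hdvd)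

end Dehomogenize

/-- The binary form `f` has a nonreal root in `ℙ¹(ℂ)`: the hypothesis under which real rank is
computed. Since `[1 : 0]` is real, such a root is encoded as `[z : 1]`. -/
def HasNonrealRoot (f : MvPolynomial (Fin 2) ℝ) : Prop :=
  ∃ z : ℂ, z.im ≠ 0 ∧ aeval ![z, 1] f = 0

section NonrealRoot

variable {f : MvPolynomial (Fin 2) ℝ} {d n r : ℕ}

theorem SquarefreeC.squarefree (hsf : SquarefreeC f) : Squarefree f := by
  intro g hg
  have hunit := hsf _ (by simpa using map_dvd (MvPolynomial.map (algebraMap ℝ ℂ)) hg)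
  simpa [isUnit_iff, coeff_map] using hunit

theorem card_roots_dehomogenize_le (hf : f.IsHomogeneous d) :
    ((dehomogenize f).roots.toFinset.card : ℕ∞) ≤ (projRoots f).encard := by
  have hne (t : ℝ) : (![t, 1] : Fin 2 → ℝ) ≠ 0 := fun h => by simpa using congrFun h 1
  let φ (t : ℝ) : Projectivization ℝ (Fin 2 → ℝ) := Projectivization.mk ℝ ![t, 1] (hne t)
  have hφ : Function.Injective φ := by
    intro t t' h
    obtain ⟨c, hc⟩ := (Projectivization.mk_eq_mk_iff' ℝ _ _ (hne t) (hne t')).1 h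
    have h0 : c * t' = t := by simpa using congrFun hc 0
    have h1 : c = 1 := by simpa using congrFun hc 1
    rw [← h0, h1, one_mul]
  have hroot : ∀ t ∈ (dehomogenize f).roots.toFinset, φ t ∈ projRoots f := by
    intro t ht
    have hPt : (dehomogenize f).eval t = 0 :=
      (Polynomial.mem_roots'.1 (Multiset.mem_toFinset.1 ht)).2
    obtain ⟨c, hc⟩ := Projectivization.exists_smul_eq_mk_rep ℝ ![t, 1] (hne t)
    change eval (φ t).rep f = 0
    rw [← homogenize_dehomogenize hf, ← hc,
      Polynomial.eval_homogenize (natDegree_dehomogenize_le hf) _ (by simp [Units.smul_def])]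
    simp [Units.smul_def, hPt]
  calc ((dehomogenize f).roots.toFinset.card : ℕ∞)
      = (φ '' (dehomogenize f).roots.toFinset).encard := by
        rw [hφ.encard_image, Set.encard_coe_eq_coe_finsetCard]
    _ ≤ (projRoots f).encard := Set.encard_le_encard (Set.image_subset_iff.2 hroot)

theorem SquarefreeC.hasNonrealRoot_of_encard_projRoots_add_two_le (hsf : SquarefreeC f)
    (hf : f.IsHomogeneous d) (hroots : (projRoots f).encard + 2 ≤ d) : HasNonrealRoot f := by
  by_contra hreal
  set P := dehomogenize f with hP
  have hsplits : P.Splits := by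
    refine Polynomial.Splits.of_splits_map (algebraMap ℝ ℂ) (IsAlgClosed.splits _) fun z hz => ?_
    rw [Polynomial.mem_roots', Polynomial.IsRoot.def, Polynomial.eval_map_algebraMap,
      aeval_dehomogenize] at hz
    have him : z.im = 0 := by
      by_contra him
      exact hreal ⟨z, him, hz.2⟩
    exact ⟨z.re, Complex.ext rfl him.symm⟩
  have hnodup : P.roots.Nodup := Polynomial.nodup_roots <|
    PerfectField.separable_iff_squarefree.2 (squarefree_dehomogenize hf hsf.squarefree)
  have hcard : P.roots.toFinset.card = P.natDegree := by
    rw [Multiset.toFinset_card_of_nodup hnodup, hsplits.natDegree_eq_card_roots]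
  have hle : P.natDegree + 2 ≤ d := by
    have h := (add_le_add_left (card_roots_dehomogenize_le hf) 2).trans hroots
    rw [← hP, hcard] at h
    exact_mod_cast h
  have hge : d ≤ P.natDegree + 1 := le_natDegree_dehomogenize_add_one hf hsf.squarefree
  omega

theorem HasNonrealRoot.two_le_of_hasDecomp (hz : HasNonrealRoot f) (hf : f ≠ 0)
    (h : HasDecomp f d r) : 2 ≤ r := by
  obtain ⟨z, him, hz⟩ := hz
  obtain ⟨c, a, b, hab, rfl⟩ := h
  by_contra! hr
  interval_cases r
  · exact hf (by simp)
  · have hlin : (a 0 : ℂ) * z + b 0 ≠ 0 := by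
      intro h
      have ha : a 0 = 0 := by simpa [him] using congrArg Complex.im h
      have hb : b 0 = 0 := by simpa [ha] using h
      exact hab 0 (by rw [ha, hb])
    have hc : c 0 = 0 := by simpa [lin, hlin] using hz
    exact hf (by simp [hc])

theorem HasNonrealRoot.exists_eq_sq_add_sq_mul (hf : f.IsHomogeneous (2 + n))
    (hz : HasNonrealRoot f) :
    ∃ (a b : ℝ) (g : MvPolynomial (Fin 2) ℝ), b ≠ 0 ∧ g.IsHomogeneous n ∧
      f = (lin 1 a ^ 2 + lin 0 b ^ 2) * g := by
  obtain ⟨z, him, hz⟩ := hz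
  rw [← aeval_dehomogenize] at hz
  obtain ⟨Q, hPQ⟩ := (dehomogenize f).quadratic_dvd_of_aeval_eq_zero_im_ne_zero hz him
  set R : Polynomial ℝ :=
    Polynomial.X ^ 2 - Polynomial.C (2 * z.re) * Polynomial.X + Polynomial.C (‖z‖ ^ 2) with hR
  have hRdeg : R.natDegree = 2 := by
    rw [hR]
    compute_degree!
  have hQdeg : Q.natDegree ≤ n := by
    rcases eq_or_ne Q 0 with rfl | hQ0
    · simp
    · have hdeg := natDegree_dehomogenize_le hf
      have hR0 : R ≠ 0 := Polynomial.ne_zero_of_natDegree_gt (n := 1) (by omega)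
      rw [hPQ, Polynomial.natDegree_mul hR0 hQ0] at hdeg
      omega
  have hRhom : R.homogenize 2 = lin 1 (-z.re) ^ 2 + lin 0 z.im ^ 2 := by
    rw [hR, Complex.sq_norm, Complex.normSq_apply, Polynomial.homogenize_add,
      Polynomial.homogenize_sub, Polynomial.homogenize_C_mul, Polynomial.homogenize_X two_ne_zero,
      Polynomial.homogenize_C, Polynomial.homogenize_X_pow le_rfl]
    refine MvPolynomial.funext fun v => ?_
    simp only [map_add, map_sub, map_mul, map_pow, eval_C, eval_X, eval_lin]
    ring
  refine ⟨-z.re, z.im, Q.homogenize n, him, Polynomial.isHomogeneous_homogenize Q, ?_⟩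
  rw [← homogenize_dehomogenize hf, hPQ, Polynomial.homogenize_mul _ _ hRdeg.le hQdeg, hRhom]

end NonrealRoot

theorem exists_rotation_diagonal (l m n : ℝ) : ∃ θ α β : ℝ, ∀ x y : ℝ,
    l * x ^ 2 + m * (x * y) + n * y ^ 2 =
      α * (Real.cos θ * x + Real.sin θ * y) ^ 2 +
        β * (-Real.sin θ * x + Real.cos θ * y) ^ 2 := by
  obtain ⟨θ, hθ⟩ : ∃ θ, (l - n) * Real.sin (2 * θ) = m * Real.cos (2 * θ) := by
    -- In the rotated coordinates `u`, `v` the coefficient of `u * v` is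
    -- `m * cos (2 * θ) - (l - n) * sin (2 * θ)`, so `2 * θ` is an argument of `l - n + m * I`.
    let w : ℂ := ⟨l - n, m⟩
    refine ⟨w.arg / 2, ?_⟩
    rw [mul_div_cancel₀ _ two_ne_zero, ← show w.re = l - n from rfl, ← show w.im = m from rfl,
      ← w.norm_mul_cos_arg, ← w.norm_mul_sin_arg]
    ring
  rw [Real.sin_two_mul, Real.cos_two_mul'] at hθ
  have hcs := Real.cos_sq_add_sin_sq θ
  refine ⟨θ, l * Real.cos θ ^ 2 + m * (Real.cos θ * Real.sin θ) + n * Real.sin θ ^ 2,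
    l * Real.sin θ ^ 2 - m * (Real.cos θ * Real.sin θ) + n * Real.cos θ ^ 2, fun x y => ?_⟩
  set c := Real.cos θ
  set s := Real.sin θ
  have hx : x = c * (c * x + s * y) - s * (-s * x + c * y) := by linear_combination -x * hcs
  have hy : y = s * (c * x + s * y) + c * (-s * x + c * y) := by linear_combination -y * hcs
  generalize c * x + s * y = u at *
  generalize -s * x + c * y = v at *
  subst hx hy
  linear_combination -u * v * hθ

theorem exists_simultaneous_diagonalization {g : MvPolynomial (Fin 2) ℝ} (hg : g.IsHomogeneous 2)
    {p q r s : ℝ} (hdet : p * s - q * r ≠ 0) :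
    ∃ p' q' r' s' α β : ℝ, p' * s' - q' * r' ≠ 0 ∧
      lin p q ^ 2 + lin r s ^ 2 = lin p' q' ^ 2 + lin r' s' ^ 2 ∧
      g = C α * lin p' q' ^ 2 + C β * lin r' s' ^ 2 := by
  obtain ⟨l, m, n, hlmn⟩ : ∃ l m n : ℝ, ∀ v, eval v g = l * eval v (lin p q) ^ 2 +
      m * (eval v (lin p q) * eval v (lin r s)) + n * eval v (lin r s) ^ 2 := by
    obtain ⟨l, m, n, h⟩ := exists_eval_eq_of_isHomogeneous_two hg
    set δ := p * s - q * r with hδ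
    -- Substitute `x = (s * u - q * v) / δ` and `y = (p * v - r * u) / δ`.
    refine ⟨(l * s ^ 2 - m * (r * s) + n * r ^ 2) / δ ^ 2,
      (m * (p * s + q * r) - 2 * (l * (q * s) + n * (p * r))) / δ ^ 2,
      (l * q ^ 2 - m * (p * q) + n * p ^ 2) / δ ^ 2, fun v => ?_⟩
    rw [h, eval_lin, eval_lin]
    field_simp
    rw [hδ]
    ring
  obtain ⟨θ, α, β, hθ⟩ := exists_rotation_diagonal l m n
  have hcs := Real.cos_sq_add_sin_sq θ
  set c := Real.cos θ
  set t := Real.sin θ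
  refine ⟨c * p + t * r, c * q + t * s, -t * p + c * r, -t * q + c * s, α, β, ?_,
    MvPolynomial.funext fun v => ?_, MvPolynomial.funext fun v => ?_⟩
  · convert hdet using 1
    linear_combination (p * s - q * r) * hcs
  · simp only [map_add, map_pow, eval_lin]
    linear_combination -((p * v 0 + q * v 1) ^ 2 + (r * v 0 + s * v 1) ^ 2) * hcs
  · rw [hlmn, hθ]
    simp only [map_add, map_mul, map_pow, eval_lin, eval_C]
    ring

theorem hasDecomp_three_of_abs_le {α β p q r s : ℝ} (hdet : p * s - q * r ≠ 0) (h : |β| ≤ |α|) :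
    HasDecomp ((lin p q ^ 2 + lin r s ^ 2) * (C α * lin p q ^ 2 + C β * lin r s ^ 2)) 4 3 := by
  obtain ⟨t, ht⟩ : ∃ t, 6 * α * t ^ 2 = α + β := by
    rcases eq_or_ne α 0 with rfl | hα
    · exact ⟨0, by simpa [eq_comm] using h⟩
    · have hratio : -1 ≤ β / α := by
        refine (abs_le.1 ?_).1
        rw [abs_div]
        exact div_le_one_of_le₀ h (abs_nonneg α)
      refine ⟨√((1 + β / α) / 6), ?_⟩
      rw [Real.sq_sqrt (by linarith)]
      field_simp
  have hne (t : ℝ) : (p + t * r, q + t * s) ≠ (0, 0) := by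
    intro h
    rw [Prod.mk.injEq] at h
    exact hdet (by linear_combination s * h.1 - r * h.2)
  have hrs : (r, s) ≠ (0, 0) := by
    intro h
    rw [Prod.mk.injEq] at h
    exact hdet (by rw [h.1, h.2]; ring)
  refine ⟨![α / 2, α / 2, β - α * t ^ 4], ![p + t * r, p + -t * r, r],
    ![q + t * s, q + -t * s, s], fun j => ?_, MvPolynomial.funext fun v => ?_⟩
  · fin_cases j
    exacts [hne t, hne (-t), hrs]
  · obtain rfl : β = 6 * α * t ^ 2 - α := by linear_combination -ht
    simp only [Fin.sum_univ_three, cons_val_zero, cons_val_one, cons_val, map_add, map_mul, map_pow,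
      eval_lin, eval_C]
    ring

theorem HasNonrealRoot.hasDecomp_three {f : MvPolynomial (Fin 2) ℝ} (hf : f.IsHomogeneous 4)
    (hz : HasNonrealRoot f) : HasDecomp f 4 3 := by
  obtain ⟨a, b, g, hb, hg, rfl⟩ := hz.exists_eq_sq_add_sq_mul (n := 2) hf
  obtain ⟨p, q, r, s, α, β, hdet, hsq, rfl⟩ := exists_simultaneous_diagonalization hg
    (p := 1) (q := a) (r := 0) (s := b) (by simpa using hb)
  rw [hsq]
  rcases le_total |β| |α| with h | h
  · exact hasDecomp_three_of_abs_le hdet h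
  · rw [add_comm (lin p q ^ 2), add_comm (C α * _)]
    exact hasDecomp_three_of_abs_le (fun h0 => hdet (by linear_combination -h0)) h

end BinaryForm

open BinaryForm in
theorem stmt12_general {f : MvPolynomial (Fin 2) ℝ} (hf : f.IsHomogeneous 4) (hf0 : f ≠ 0)
    (hz : HasNonrealRoot f) :
    ((catalecticant f).det ≠ 0 → realRank f 4 = 3) ∧
    ((catalecticant f).det = 0 → realRank f 4 = 2) := by
  have h3 : HasDecomp f 4 3 := hz.hasDecomp_three hf
  refine ⟨fun hdet => ?_, fun hdet => ?_⟩
  · have hrank : (catalecticant f).rank = 3 := by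
      simpa using Matrix.rank_of_isUnit _ ((Matrix.isUnit_iff_isUnit_det _).2 hdet.isUnit)
    have hmin : IsLeast {r | HasDecomp f 4 r} 3 :=
      ⟨h3, fun r hr => hrank ▸ hr.rank_catalecticant_le⟩
    exact hmin.csInf_eq
  · have hmin : IsLeast {r | HasDecomp f 4 r} 2 :=
      ⟨h3.two_of_det_catalecticant_eq_zero hdet, fun r hr => hz.two_le_of_hasDecomp hf0 hr⟩
    exact hmin.csInf_eq

theorem stmt12 (f : MvPolynomial (Fin 2) ℝ) (hf : f.IsHomogeneous 4)
    (hsf : BinaryForm.SquarefreeC f)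
    (hroots : (BinaryForm.projRoots f).encard = 0 ∨ (BinaryForm.projRoots f).encard = 2) :
    ((BinaryForm.catalecticant f).det ≠ 0 → BinaryForm.realRank f 4 = 3) ∧
    ((BinaryForm.catalecticant f).det = 0 → BinaryForm.realRank f 4 = 2) := by
  exact stmt12_general hf hsf.squarefree.ne_zero <|
    hsf.hasNonrealRoot_of_encard_projRoots_add_two_le hf <| by
      rcases hroots with h | h <;> norm_num [h]
end

section
/- Let $f(x,y)=\sum_{i=0}^5\binom5i\alpha_i x^{5-i}y^i$ be a real binary quintic with distinct roots (squarefree over $\mathbb C$), and suppose that $f$ has exactly one or exactly three distinct real roots in $\mathbb P^1(\mathbb R)$. The real rank of $f$ is the least $r$ such that $f=\sum_{j=1}^r c_j\ell_j^5$ with $c_j\in\mathbb R$ and nonzero real linear forms $\ell_j$. Let $H=(\alpha_{i+j})_{0\le i\le 2,\,0\le j\le 3}$ be the $3\times4$ catalecticant matrix of $f$, let $\beta_i$ be $(-1)^i$ times the $3\times 3$ minor of $H$ obtained by deleting column $i$ ($0\le i\le 3$), and let $I_{12}(f)=\Delta(\beta)$ be the discriminant of the binary cubic $\beta_0x^3+\beta_1x^2y+\beta_2xy^2+\beta_3y^3$,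 where for a cubic $a_0x^3+3a_1x^2y+3a_2xy^2+a_3y^3$ we set $\Delta=4(a_0a_2-a_1^2)(a_1a_3-a_2^2)-(a_0a_3-a_1a_2)^2$ (positive exactly when the cubic has three distinct real roots). Then: 1. the real rank of $f$ is at least $2$ and at most $4$; 2. if $H$ has maximal rank $3$ (which holds for general $f$, and in particular whenever $I_{12}(f)\ne0$), then the real rank of $f$ is $3$ or $4$; 3. the real rank of $f$ is $3$ if and only if $I_{12}(f)>0$, and it is $4$ if $I_{12}(f)<0$. -/
open MvPolynomial

noncomputable section

/-- The real linear binary form `a·x + b·y`. -/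
def lin (a b : ℝ) : MvPolynomial (Fin 2) ℝ := C a * X 0 + C b * X 1

/-- `f` is a sum of `r` terms `cⱼ · ℓⱼ^d` with `ℓⱼ` nonzero real linear forms. -/
def HasDecomp (f : MvPolynomial (Fin 2) ℝ) (d r : ℕ) : Prop :=
  ∃ c a b : Fin r → ℝ, (∀ j, (a j, b j) ≠ (0, 0)) ∧
    f = ∑ j, C (c j) * lin (a j) (b j) ^ d

/-- The real rank of a binary form of degree `d`: the least number of `d`-th powers
of real linear forms needed to write `f` as a real linear combination of them. -/
def realRank (f : MvPolynomial (Fin 2) ℝ) (d : ℕ) : ℕ :=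
  sInf {r | HasDecomp f d r}

/-- The set of real projective roots of a binary form. -/
def projRoots (f : MvPolynomial (Fin 2) ℝ) : Set (Projectivization ℝ (Fin 2 → ℝ)) :=
  {p | eval p.rep f = 0}

/-- `f` has distinct roots, i.e. it is squarefree as a complex polynomial. -/
def SquarefreeC (f : MvPolynomial (Fin 2) ℝ) : Prop :=
  Squarefree (MvPolynomial.map (algebraMap ℝ ℂ) f)

/-- The coefficients `α₀, …, α₅` of a binary quintic written as
`∑ i, (5 choose i) · αᵢ · x^(5-i) · y^i`. -/
def quinticCoeff (f : MvPolynomial (Fin 2) ℝ) (i : ℕ) : ℝ :=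
  f.coeff (Finsupp.single 0 (5 - i) + Finsupp.single 1 i) / (Nat.choose 5 i : ℝ)

/-- The `3 × 4` Hankel (catalecticant) matrix `(α_{i+j})` of a binary quintic. -/
def catalecticant (f : MvPolynomial (Fin 2) ℝ) : Matrix (Fin 3) (Fin 4) ℝ :=
  Matrix.of fun i j => quinticCoeff f (i.val + j.val)

/-- `(-1)^i` times the `3 × 3` minor of the catalecticant with column `i` deleted. -/
def apolarCoeff (f : MvPolynomial (Fin 2) ℝ) (i : Fin 4) : ℝ :=
  (-1) ^ i.val * ((catalecticant f).submatrix id i.succAbove).det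

/-- The discriminant of the binary cubic `a₀ x³ + 3 a₁ x² y + 3 a₂ x y² + a₃ y³`, positive
exactly if the cubic has three distinct real roots. -/
def cubicDisc (a₀ a₁ a₂ a₃ : ℝ) : ℝ :=
  4 * (a₀ * a₂ - a₁ ^ 2) * (a₁ * a₃ - a₂ ^ 2) - (a₀ * a₃ - a₁ * a₂) ^ 2

/-- The invariant of degree 12 of a binary quintic: the discriminant of the cubic
`β₀ x³ + β₁ x² y + β₂ x y² + β₃ y³` whose coefficients are the signed maximal minors
of the catalecticant. -/
def I12 (f : MvPolynomial (Fin 2) ℝ) : ℝ :=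
  cubicDisc (apolarCoeff f 0) (apolarCoeff f 1 / 3) (apolarCoeff f 2 / 3) (apolarCoeff f 3)

end

/-
By Sylvester's apolarity, a form of degree `d` has a decomposition with `r ≤ d` real linear forms
exactly when it is apolar to some polynomial of degree `r` with `r` distinct real projective roots.

For a quintic with catalecticant of rank `3` the apolar cubic is forced: its coefficients are the
signed maximal minors of the `3 × 4` catalecticant. So the real rank is `3` precisely when the
discriminant of that cubic is positive.

For the upper bound `4`, send a simple nonreal root to `I`. The apolar quartics vanishing at `0`
and `∞` come from a quadratic whose coefficients are Hankel minors, and the quadratic has real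
roots different from `0` as soon as a suitable sum of two minors is positive. Rotations fix the
conjugate pair `±I`, and the average of that sum over all rotations is a positive multiple of the
squared modulus of the derivative at `I`, so some rotation yields four real roots.

A pure fifth power has no simple root, which excludes rank `1`.
-/

section Sylvester

variable {K ι : Type*} [Field K]

/-- The shift `α ↦ (α (i + 1))ᵢ` of coefficient sequences. On the coefficients of binary forms,
written with binomial factors, it is the action of `∂/∂y` relative to that of `∂/∂x`. -/
def shift (K : Type*) [Field K] : Module.End K (ℕ → K) :=
  LinearMap.funLeft K K (· + 1)

lemma shift_apply (α : ℕ → K) (i : ℕ) : shift K α i = α (i + 1) :=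
  rfl

lemma shift_pow_apply (k : ℕ) (α : ℕ → K) (i : ℕ) : (shift K ^ k) α i = α (i + k) := by
  induction k generalizing i with
  | zero => rfl
  | succ k ih => rw [pow_succ', Module.End.mul_apply, add_comm k, ← add_assoc]; exact ih (i + 1)

/-- The linear form vanishing at the point `[p : q]`, dehomogenized; acting through the shift,
it annihilates the coefficient sequence `p ^ (d - i) * q ^ i` of the `d`-th power of
`p * x + q * y`. -/
noncomputable def apolarLin (p q : K) : Polynomial K :=
  Polynomial.C q - Polynomial.C p * Polynomial.X

lemma aeval_shift_apolarLin (p q : K) (α : ℕ → K) (i : ℕ) :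
    Polynomial.aeval (shift K) (apolarLin p q) α i = q * α i - p * α (i + 1) := by
  simp [apolarLin, shift_apply]

lemma aeval_shift_apolarLin_sum (s : Finset ι) (p q e : ι → K) (p₀ q₀ : K) {d i : ℕ} (hi : i ≤ d) :
    Polynomial.aeval (shift K) (apolarLin p₀ q₀)
        (fun i => ∑ j ∈ s, e j * (p j ^ (d + 1 - i) * q j ^ i)) i =
      ∑ j ∈ s, e j * (p j * q₀ - p₀ * q j) * (p j ^ (d - i) * q j ^ i) := by
  rw [aeval_shift_apolarLin, Finset.mul_sum, Finset.mul_sum, ← Finset.sum_sub_distrib]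
  refine Finset.sum_congr rfl fun j _ => ?_
  rw [show d + 1 - i = d - i + 1 by lia, show d + 1 - (i + 1) = d - i by lia]
  ring

lemma exists_eq_const_mul_pow_mul_pow {p q : K} (hpq : (p, q) ≠ (0, 0)) {d : ℕ} {γ : ℕ → K}
    (hγ : ∀ i < d, q * γ i = p * γ (i + 1)) :
    ∃ c, ∀ i ≤ d, γ i = c * (p ^ (d - i) * q ^ i) := by
  rcases eq_or_ne p 0 with rfl | hp
  · have hq : q ≠ 0 := fun hq => hpq (by rw [hq])
    refine ⟨γ d / q ^ d, fun i hi => ?_⟩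
    rcases hi.lt_or_eq with hlt | rfl
    · have hzero : γ i = 0 := by simpa [hq] using hγ i hlt
      simp [hzero, zero_pow (Nat.sub_ne_zero_of_lt hlt)]
    · simp [hq]
  · refine ⟨γ 0 / p ^ d, fun i hi => ?_⟩
    induction i with
    | zero => simp [hp]
    | succ i ih =>
      apply mul_left_cancel₀ hp
      rw [← hγ i hi, ih (by lia), show d - i = d - (i + 1) + 1 by lia]
      ring

lemma aeval_shift_toPoly (P : Cubic K) (α : ℕ → K) (i : ℕ) :
    Polynomial.aeval (shift K) P.toPoly α i =
      P.d * α i + P.c * α (i + 1) + P.b * α (i + 2) + P.a * α (i + 3) := by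
  simp only [Cubic.toPoly, map_add, map_mul, map_pow, Polynomial.aeval_C, Polynomial.aeval_X,
    LinearMap.add_apply, Module.End.mul_apply, Module.algebraMap_end_apply, Pi.add_apply,
    Pi.smul_apply, smul_eq_mul, shift_apply, shift_pow_apply]
  ring

/-- Sylvester's theorem: a sequence annihilated by a product of pairwise non-proportional linear
forms is a combination of the corresponding powers. -/
theorem exists_eq_sum_pow_mul_pow (s : Finset ι) {p q : ι → K}
    (hpq : ∀ j ∈ s, (p j, q j) ≠ (0, 0))
    (hindep : (s : Set ι).Pairwise fun j k => p j * q k ≠ p k * q j) {d : ℕ} {α : ℕ → K}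
    (hα : ∀ i, i + s.card ≤ d →
      Polynomial.aeval (shift K) (∏ j ∈ s, apolarLin (p j) (q j)) α i = 0) :
    ∃ c : ι → K, ∀ i ≤ d, α i = ∑ j ∈ s, c j * (p j ^ (d - i) * q j ^ i) := by
  classical
  induction s using Finset.induction_on generalizing d α with
  | empty => exact ⟨0, fun i hi => by simpa using hα i (by simpa using hi)⟩
  | insert a s ha ih =>
    rcases d with _ | d
    · refine ⟨Pi.single a (α 0), fun i hi => ?_⟩
      obtain rfl : i = 0 := by lia
      simp [Pi.single_apply]
    rw [Finset.coe_insert, Set.pairwise_insert_of_notMem (by simpa using ha)] at hindep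
    obtain ⟨hs, hdet⟩ := hindep
    set δα := Polynomial.aeval (shift K) (apolarLin (p a) (q a)) α with hδα
    obtain ⟨c, hc⟩ := ih (fun j hj => hpq j (Finset.mem_insert_of_mem hj)) hs (d := d) (α := δα)
      fun i hi => by
        rw [hδα, ← Module.End.mul_apply, ← map_mul, mul_comm, ← Finset.prod_insert
          (f := fun j => apolarLin (p j) (q j)) ha]
        exact hα i (by rw [Finset.card_insert_of_notMem ha]; lia)
    set e : ι → K := fun j => c j / (p j * q a - p a * q j)
    -- Subtracting the powers at the points of `s` leaves a sequence killed by the form at `a`.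
    obtain ⟨c₀, hc₀⟩ := exists_eq_const_mul_pow_mul_pow (hpq a (Finset.mem_insert_self a s))
      (d := d + 1) (γ := fun i => α i - ∑ j ∈ s, e j * (p j ^ (d + 1 - i) * q j ^ i))
      fun i hi => by
        have hsum : Polynomial.aeval (shift K) (apolarLin (p a) (q a))
            (fun i => ∑ j ∈ s, e j * (p j ^ (d + 1 - i) * q j ^ i)) i = δα i := by
          rw [aeval_shift_apolarLin_sum s p q e _ _ (by lia), hc i (by lia)]
          exact Finset.sum_congr rfl fun j hj => by
            rw [div_mul_cancel₀ _ (sub_ne_zero.2 (hdet j hj).2)]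
        rw [hδα, aeval_shift_apolarLin, aeval_shift_apolarLin] at hsum
        linear_combination -hsum
    refine ⟨Function.update e a c₀, fun i hi => ?_⟩
    have hsum : ∑ j ∈ s, Function.update e a c₀ j * (p j ^ (d + 1 - i) * q j ^ i) =
        ∑ j ∈ s, e j * (p j ^ (d + 1 - i) * q j ^ i) :=
      Finset.sum_congr rfl fun j hj => by
        rw [Function.update_of_ne (ne_of_mem_of_not_mem hj ha)]
    rw [Finset.sum_insert ha, Function.update_self, hsum, ← hc₀ i hi, sub_add_cancel]

end Sylvester

section RealRoots

/-- The polynomial `P`, read as a binary form of degree `r`, is a product of `r` pairwise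
non-proportional real linear forms. Points at infinity count: the `apolarLin` factors at `p = 0`
are constants. -/
def HasDistinctRealRoots (P : Polynomial ℝ) (r : ℕ) : Prop :=
  ∃ p q : Fin r → ℝ, (∀ j, (p j, q j) ≠ (0, 0)) ∧ (Pairwise fun j k => p j * q k ≠ p k * q j) ∧
    P = ∏ j, apolarLin (p j) (q j)

lemma hasDistinctRealRoots_one : HasDistinctRealRoots 1 0 :=
  ⟨0, 0, (·.elim0), fun j => j.elim0, by simp⟩

lemma natDegree_apolarLin_le (p q : ℝ) : (apolarLin p q).natDegree ≤ 1 := by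
  rw [apolarLin]
  compute_degree

lemma eval_homogenize_apolarLin (p q s t : ℝ) :
    eval ![t, s] ((apolarLin p q).homogenize 1) = q * s - p * t := by
  simp [apolarLin]

lemma HasDistinctRealRoots.apolarLin_mul {P : Polynomial ℝ} {r : ℕ}
    (h : HasDistinctRealRoots P r) {p q : ℝ} (hpq : (p, q) ≠ (0, 0))
    (hP : eval ![q, p] (P.homogenize r) ≠ 0) :
    HasDistinctRealRoots (apolarLin p q * P) (r + 1) := by
  obtain ⟨p', q', hpq', hindep, rfl⟩ := h
  have hhom : (∏ j, apolarLin (p' j) (q' j)).homogenize r =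
      ∏ j, (apolarLin (p' j) (q' j)).homogenize 1 := by
    simpa using Polynomial.homogenize_finsetProd (s := Finset.univ) (n := fun _ : Fin r => 1)
      fun j _ => natDegree_apolarLin_le (p' j) (q' j)
  rw [hhom, map_prod, Finset.prod_ne_zero_iff] at hP
  simp only [eval_homogenize_apolarLin, Finset.mem_univ, true_imp_iff] at hP
  refine ⟨Fin.cons p p', Fin.cons q q', fun j => ?_, fun j k hjk => ?_, ?_⟩
  · cases j using Fin.cases with
    | zero => exact hpq
    | succ j => exact hpq' j
  · cases j using Fin.cases with
    | zero =>
      cases k using Fin.cases with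
      | zero => exact absurd rfl hjk
      | succ k => exact fun h => hP k (by simpa [sub_eq_zero, mul_comm] using h)
    | succ j =>
      cases k using Fin.cases with
      | zero => exact fun h => hP j (by simpa [sub_eq_zero, mul_comm] using h.symm)
      | succ k => exact hindep fun h => hjk (congrArg Fin.succ h)
  · simp [Fin.prod_univ_succ]

/-- The quadratic `a + b * X + c * X ^ 2`. -/
noncomputable def quadratic (a b c : ℝ) : Polynomial ℝ :=
  Polynomial.C a + Polynomial.C b * Polynomial.X + Polynomial.C c * Polynomial.X ^ 2

lemma eval_homogenize_quadratic (a b c s t : ℝ) :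
    eval ![t, s] ((quadratic a b c).homogenize 2) = a * s ^ 2 + b * s * t + c * t ^ 2 := by
  have hhom : (quadratic a b c).homogenize 2 =
      C a * X 1 ^ 2 + C b * (X 0 * X 1) + C c * X 0 ^ 2 := by
    simp [quadratic]
  rw [hhom]
  simp only [map_add, map_mul, map_pow, eval_C, eval_X, Matrix.cons_val_zero, Matrix.cons_val_one]
  ring

lemma exists_ne_zero_root_of_discrim_pos {a b c : ℝ} (h : 0 < discrim a b c) :
    ∃ m ≠ 0, m ^ 2 - b * m + a * c = 0 := by
  have hsq : √(discrim a b c) ^ 2 = b ^ 2 - 4 * a * c := Real.sq_sqrt h.le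
  have hpos : 0 < √(discrim a b c) := Real.sqrt_pos.2 h
  rcases ne_or_eq (b + √(discrim a b c)) 0 with hb | hb
  · exact ⟨_, div_ne_zero hb two_ne_zero, by linear_combination hsq / 4⟩
  · have hb' : b - √(discrim a b c) ≠ 0 := by linarith
    exact ⟨_, div_ne_zero hb' two_ne_zero, by linear_combination hsq / 4⟩

lemma hasDistinctRealRoots_quadratic {a b c : ℝ} (h : 0 < discrim a b c) :
    HasDistinctRealRoots (quadratic a b c) 2 := by
  obtain ⟨m, hm, hroot⟩ := exists_ne_zero_root_of_discrim_pos h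
  obtain ⟨n, rfl⟩ : ∃ n, c = m * n := ⟨c / m, (mul_div_cancel₀ c hm).symm⟩
  obtain rfl : b = m + a * n := mul_left_cancel₀ hm (by linear_combination -hroot)
  have hdisc : discrim a (m + a * n) (m * n) = (m - a * n) ^ 2 := by
    rw [discrim]
    ring
  have hne : m - a * n ≠ 0 := fun hzero => h.ne' (by rw [hdisc, hzero, zero_pow two_ne_zero])
  have hlin : HasDistinctRealRoots (apolarLin (-n) 1) 1 := by
    simpa using hasDistinctRealRoots_one.apolarLin_mul (p := -n) (q := 1) (by simp) (by simp)
  have hfactor : quadratic a (m + a * n) (m * n) = apolarLin (-m) a * apolarLin (-n) 1 := by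
    simp only [quadratic, apolarLin, map_add, map_mul, map_neg, map_one]
    ring
  rw [hfactor]
  refine hlin.apolarLin_mul (by simp [hm]) ?_
  rw [eval_homogenize_apolarLin]
  exact fun hzero => hne (by linear_combination -hzero)

lemma exists_apolarLin_mul_quadratic (P : Cubic ℝ) :
    ∃ p q a b c : ℝ, (p, q) ≠ (0, 0) ∧ P.toPoly = apolarLin p q * quadratic a b c := by
  rcases eq_or_ne P.a 0 with ha | ha
  · refine ⟨0, 1, P.d, P.c, P.b, by simp, ?_⟩
    simp only [Cubic.toPoly, ha, apolarLin, quadratic, map_zero, map_one]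
    ring
  · have hdeg : P.toPoly.natDegree = 3 := Cubic.natDegree_of_a_ne_zero ha
    have hred : ¬Irreducible P.toPoly := fun hirr => by
      linarith [hirr.natDegree_le_two]
    rw [Polynomial.irreducible_iff_roots_eq_zero_of_degree_le_three (by lia) (by lia)] at hred
    obtain ⟨x, hx⟩ := Multiset.exists_mem_of_ne_zero hred
    have hd : P.d = -(P.a * x ^ 3 + P.b * x ^ 2 + P.c * x) := by
      have hroot := Polynomial.isRoot_of_mem_roots hx
      simp only [Cubic.toPoly, Polynomial.IsRoot, Polynomial.eval_add, Polynomial.eval_mul,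
        Polynomial.eval_pow, Polynomial.eval_C, Polynomial.eval_X] at hroot
      linear_combination hroot
    refine ⟨1, x, -(P.c + P.b * x + P.a * x ^ 2), -(P.b + P.a * x), -P.a, by simp, ?_⟩
    simp only [Cubic.toPoly, hd, apolarLin, quadratic, map_add, map_mul, map_neg, map_pow, map_one]
    ring

lemma hasDistinctRealRoots_of_cubicDisc_pos {P : Cubic ℝ}
    (h : 0 < cubicDisc P.d (P.c / 3) (P.b / 3) P.a) : HasDistinctRealRoots P.toPoly 3 := by
  obtain ⟨p, q, a, b, c, hpq, hP⟩ := exists_apolarLin_mul_quadratic P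
  have hcoeff : P = ⟨-(p * c), q * c - p * b, q * b - p * a, q * a⟩ := by
    rw [← Cubic.toPoly_injective, hP]
    simp only [Cubic.toPoly, apolarLin, quadratic, map_sub, map_mul, map_neg]
    ring
  have hdisc : 27 * cubicDisc P.d (P.c / 3) (P.b / 3) P.a =
      discrim a b c * (a * p ^ 2 + b * p * q + c * q ^ 2) ^ 2 := by
    rw [hcoeff, cubicDisc, discrim]
    ring
  have hprod : 0 < discrim a b c * (a * p ^ 2 + b * p * q + c * q ^ 2) ^ 2 := by
    rw [← hdisc]
    positivity
  rw [hP]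
  refine (hasDistinctRealRoots_quadratic (pos_of_mul_pos_left hprod (sq_nonneg _))).apolarLin_mul
    hpq ?_
  rw [eval_homogenize_quadratic]
  exact fun h => hprod.ne' (by rw [h]; ring)

end RealRoots

section BinaryForms

/-- The binary form `∑ (d choose i) * α i * x ^ (d - i) * y ^ i` of degree `d`. -/
noncomputable def binaryForm (d : ℕ) (α : ℕ → ℝ) : MvPolynomial (Fin 2) ℝ :=
  ∑ i ∈ Finset.range (d + 1), C (d.choose i * α i) * (X 0 ^ (d - i) * X 1 ^ i)

lemma binaryForm_congr {d : ℕ} {α β : ℕ → ℝ} (h : ∀ i ≤ d, α i = β i) :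
    binaryForm d α = binaryForm d β :=
  Finset.sum_congr rfl fun i hi => by rw [h i (Finset.mem_range_succ_iff.1 hi)]

lemma lin_pow (a b : ℝ) (d : ℕ) : lin a b ^ d = binaryForm d fun i => a ^ (d - i) * b ^ i := by
  rw [lin, add_comm, add_pow, binaryForm]
  refine Finset.sum_congr rfl fun i _ => ?_
  simp only [mul_pow, map_mul, map_pow, map_natCast]
  ring

lemma sum_C_mul_lin_pow {r : ℕ} (c a b : Fin r → ℝ) (d : ℕ) :
    ∑ j, C (c j) * lin (a j) (b j) ^ d =
      binaryForm d fun i => ∑ j, c j * (a j ^ (d - i) * b j ^ i) := by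
  simp only [lin_pow, binaryForm, Finset.mul_sum, map_sum, Finset.sum_mul]
  rw [Finset.sum_comm]
  refine Finset.sum_congr rfl fun i _ => Finset.sum_congr rfl fun j _ => ?_
  simp only [map_mul]
  ring

lemma hasDecomp_binaryForm {P : Polynomial ℝ} {r d : ℕ} {α : ℕ → ℝ}
    (hP : HasDistinctRealRoots P r)
    (hα : ∀ i, i + r ≤ d → Polynomial.aeval (shift ℝ) P α i = 0) :
    HasDecomp (binaryForm d α) d r := by
  obtain ⟨p, q, hpq, hindep, rfl⟩ := hP
  obtain ⟨c, hc⟩ := exists_eq_sum_pow_mul_pow Finset.univ (fun j _ => hpq j)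
    (fun j _ k _ hjk => hindep hjk) (by simpa using hα)
  exact ⟨c, p, q, hpq, by rw [sum_C_mul_lin_pow]; exact binaryForm_congr hc⟩

lemma binomialExponent_inj {d i k : ℕ} :
    Finsupp.single (0 : Fin 2) (d - k) + Finsupp.single 1 k =
      Finsupp.single 0 (d - i) + Finsupp.single 1 i ↔ k = i :=
  ⟨fun h => by simpa using DFunLike.congr_fun h 1, fun h => by rw [h]⟩

lemma coeff_binaryForm {d i : ℕ} (hi : i ≤ d) (α : ℕ → ℝ) :
    (binaryForm d α).coeff (Finsupp.single 0 (d - i) + Finsupp.single 1 i) =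
      d.choose i * α i := by
  have hmonomial (k : ℕ) : (X 0 ^ (d - k) * X 1 ^ k : MvPolynomial (Fin 2) ℝ) =
      monomial (Finsupp.single 0 (d - k) + Finsupp.single 1 k) 1 := by
    simp [X_pow_eq_monomial, monomial_mul]
  simp only [binaryForm, coeff_sum, coeff_C_mul, hmonomial, coeff_monomial,
    binomialExponent_inj, mul_ite, mul_one, mul_zero]
  rw [Finset.sum_ite_eq', if_pos (Finset.mem_range_succ_iff.2 hi)]

lemma quinticCoeff_binaryForm {i : ℕ} (hi : i ≤ 5) (α : ℕ → ℝ) :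
    quinticCoeff (binaryForm 5 α) i = α i := by
  rw [quinticCoeff, coeff_binaryForm hi]
  exact mul_div_cancel_left₀ _ (Nat.cast_ne_zero.2 (Nat.choose_pos hi).ne')

lemma isHomogeneous_binaryForm (d : ℕ) (α : ℕ → ℝ) : (binaryForm d α).IsHomogeneous d := by
  refine IsHomogeneous.sum _ _ _ fun i hi => ?_
  have hdeg := ((isHomogeneous_X_pow (R := ℝ) (0 : Fin 2) (d - i)).mul
    (isHomogeneous_X_pow 1 i)).C_mul (d.choose i * α i)
  rwa [Nat.sub_add_cancel (Finset.mem_range_succ_iff.1 hi)] at hdeg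

lemma binaryForm_quinticCoeff {f : MvPolynomial (Fin 2) ℝ} (hf : f.IsHomogeneous 5) :
    binaryForm 5 (quinticCoeff f) = f := by
  ext m
  by_cases hm : m.degree = 5
  · obtain ⟨i, hi, rfl⟩ : ∃ i ≤ 5, m = Finsupp.single 0 (5 - i) + Finsupp.single 1 i := by
      have hsum : m 0 + m 1 = 5 := by rw [← hm, Finsupp.degree_eq_sum, Fin.sum_univ_two]
      refine ⟨m 1, by lia, ?_⟩
      ext k
      fin_cases k
      · simpa using (by lia : m 0 = 5 - m 1)
      · simp
    rw [coeff_binaryForm hi, quinticCoeff, mul_div_cancel₀]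
    exact Nat.cast_ne_zero.2 (Nat.choose_pos hi).ne'
  · rw [(isHomogeneous_binaryForm 5 _).coeff_eq_zero hm, hf.coeff_eq_zero hm]

end BinaryForms

section RealRank

variable {f : MvPolynomial (Fin 2) ℝ} {d r s : ℕ}

namespace HasDecomp

lemma succ (h : HasDecomp f d r) : HasDecomp f d (r + 1) := by
  obtain ⟨c, a, b, hab, rfl⟩ := h
  refine ⟨Fin.cons 0 c, Fin.cons 1 a, Fin.cons 0 b, Fin.cases (by simp) hab, ?_⟩
  simp [Fin.sum_univ_succ]

lemma mono (h : HasDecomp f d r) (hrs : r ≤ s) : HasDecomp f d s :=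
  Nat.le_induction h (fun _ _ => succ) s hrs

lemma aeval_lin (h : HasDecomp f d r) {p q p' q' : ℝ} (hdet : p * q' - p' * q ≠ 0) :
    HasDecomp (aeval ![lin p q, lin p' q'] f) d r := by
  obtain ⟨c, a, b, hab, rfl⟩ := h
  refine ⟨c, fun j => a j * p + b j * p', fun j => a j * q + b j * q', fun j hzero => hab j ?_, ?_⟩
  · obtain ⟨hx, hy⟩ := Prod.mk_inj.1 hzero
    have ha : a j * (p * q' - p' * q) = 0 := by linear_combination q' * hx - p' * hy
    have hb : b j * (p * q' - p' * q) = 0 := by linear_combination p * hy - q * hx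
    rw [(mul_eq_zero.1 ha).resolve_right hdet, (mul_eq_zero.1 hb).resolve_right hdet]
  · rw [map_sum]
    refine Finset.sum_congr rfl fun j _ => ?_
    simp only [lin, map_mul, map_pow, map_add, aeval_C, aeval_X, algebraMap_eq,
      Matrix.cons_val_zero, Matrix.cons_val_one]
    ring

end HasDecomp

lemma hasDecomp_sum_of_coeff_eq_zero {c a b : Fin (r + 1) → ℝ}
    (hab : ∀ j, (a j, b j) ≠ (0, 0)) {k : Fin (r + 1)} (hk : c k = 0) :
    HasDecomp (∑ j, C (c j) * lin (a j) (b j) ^ d) d r :=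
  ⟨fun j => c (k.succAbove j), fun j => a (k.succAbove j), fun j => b (k.succAbove j),
    fun j => hab _, by simp [Fin.sum_univ_succAbove _ k, hk]⟩

lemma exists_eq_smul_of_det_eq_zero {p q p' q' : ℝ} (hpq : (p, q) ≠ (0, 0))
    (hdet : p * q' = p' * q) : ∃ t, p' = t * p ∧ q' = t * q := by
  rcases eq_or_ne p 0 with rfl | hp
  · have hq : q ≠ 0 := fun hq => hpq (by rw [hq])
    exact ⟨q' / q, by simpa [hq] using hdet.symm, (div_mul_cancel₀ q' hq).symm⟩
  · exact ⟨p' / p, (div_mul_cancel₀ p' hp).symm, by field_simp; linear_combination hdet⟩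

lemma hasDecomp_sum_of_det_eq_zero {c a b : Fin (r + 1) → ℝ}
    (hab : ∀ j, (a j, b j) ≠ (0, 0)) {j k : Fin (r + 1)} (hjk : j ≠ k)
    (hdet : a j * b k = a k * b j) :
    HasDecomp (∑ j, C (c j) * lin (a j) (b j) ^ d) d r := by
  obtain ⟨t, ha, hb⟩ := exists_eq_smul_of_det_eq_zero (hab j) hdet
  have hlin : lin (a k) (b k) = C t * lin (a j) (b j) := by
    rw [lin, lin, ha, hb, map_mul, map_mul]
    ring
  -- The `k`-th power is absorbed into the `j`-th one, which leaves the coefficient zero at `k`.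
  have hmerge : ∑ i, C (c i) * lin (a i) (b i) ^ d =
      ∑ i, C ((c + Pi.single j (c k * t ^ d) - Pi.single k (c k) : Fin (r + 1) → ℝ) i) *
        lin (a i) (b i) ^ d := by
    have hsingle (l : Fin (r + 1)) (x : ℝ) :
        ∑ i, C ((Pi.single l x : Fin (r + 1) → ℝ) i) * lin (a i) (b i) ^ d =
          C x * lin (a l) (b l) ^ d := by
      rw [Fintype.sum_eq_single l fun i hi => by simp [hi], Pi.single_eq_same]
    simp only [Pi.add_apply, Pi.sub_apply, map_add, map_sub, add_mul, sub_mul,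
      Finset.sum_add_distrib, Finset.sum_sub_distrib, hsingle, hlin, mul_pow, map_mul, map_pow]
    ring
  rw [hmerge]
  exact hasDecomp_sum_of_coeff_eq_zero hab (k := k) (by simp [hjk])

lemma realRank_le (h : HasDecomp f d r) : realRank f d ≤ r :=
  Nat.sInf_le h

lemma lt_realRank (h : HasDecomp f d s) (hr : ¬HasDecomp f d r) : r < realRank f d := by
  by_contra! hle
  have hmem : HasDecomp f d (realRank f d) := Nat.sInf_mem (s := {r | HasDecomp f d r}) ⟨s, h⟩
  exact hr (hmem.mono hle)

lemma realRank_eq_succ_iff :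
    realRank f d = r + 1 ↔ HasDecomp f d (r + 1) ∧ ¬HasDecomp f d r := by
  refine ⟨fun h => ?_, fun h => le_antisymm (realRank_le h.1) (lt_realRank h.1 h.2)⟩
  refine ⟨?_, fun hr => by have := realRank_le hr; lia⟩
  rw [← h]
  exact Nat.sInf_mem (Nat.nonempty_of_sInf_eq_succ h)

end RealRank

section Catalecticant

open Matrix

lemma quinticCoeff_sum_lin_pow {r : ℕ} (c a b : Fin r → ℝ) {i : ℕ} (hi : i ≤ 5) :
    quinticCoeff (∑ j, C (c j) * lin (a j) (b j) ^ 5) i = ∑ j, c j * (a j ^ (5 - i) * b j ^ i) := by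
  rw [sum_C_mul_lin_pow, quinticCoeff_binaryForm hi]

lemma catalecticant_sum_lin_pow {r : ℕ} (c a b : Fin r → ℝ) :
    catalecticant (∑ j, C (c j) * lin (a j) (b j) ^ 5) =
      (rectVandermonde b a 3)ᵀ * diagonal c * rectVandermonde b a 4 := by
  ext i k
  rw [mul_apply, catalecticant, of_apply, quinticCoeff_sum_lin_pow _ _ _ (by lia)]
  refine Finset.sum_congr rfl fun j _ => ?_
  rw [mul_diagonal, transpose_apply, rectVandermonde_apply, rectVandermonde_apply,
    show 5 - (i.val + k.val) = i.rev.val + k.rev.val by rw [Fin.val_rev, Fin.val_rev]; lia]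
  ring

lemma HasDecomp.catalecticant_rank_le {f : MvPolynomial (Fin 2) ℝ} {r : ℕ}
    (h : HasDecomp f 5 r) : (catalecticant f).rank ≤ r := by
  obtain ⟨c, a, b, -, rfl⟩ := h
  rw [catalecticant_sum_lin_pow]
  exact (rank_mul_le_right _ _).trans (rank_le_height _)

lemma catalecticant_mulVec_apolarCoeff (f : MvPolynomial (Fin 2) ℝ) :
    (catalecticant f).mulVec (apolarCoeff f) = 0 := by
  ext i
  -- The `i`-th entry is the Laplace expansion of a `4 × 4` determinant with a repeated row.
  have hdet : (of (Fin.cons (catalecticant f i) (catalecticant f)) : Matrix _ _ ℝ).det = 0 :=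
    det_zero_of_row_eq (Fin.succ_ne_zero i).symm rfl
  rw [Pi.zero_apply, ← hdet, det_succ_row_zero, mulVec, dotProduct]
  refine Finset.sum_congr rfl fun j _ => ?_
  rw [apolarCoeff, mul_left_comm, ← mul_assoc]
  rfl

lemma hasDecomp_three_of_I12_pos {f : MvPolynomial (Fin 2) ℝ} (hf : f.IsHomogeneous 5)
    (h : 0 < I12 f) : HasDecomp f 5 3 := by
  rw [← binaryForm_quinticCoeff hf]
  refine hasDecomp_binaryForm (hasDistinctRealRoots_of_cubicDisc_pos
    (P := ⟨apolarCoeff f 3, apolarCoeff f 2, apolarCoeff f 1, apolarCoeff f 0⟩) h) fun i hi => ?_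
  have hrow : ∑ j : Fin 4, quinticCoeff f (i + j.val) * apolarCoeff f j = 0 :=
    congrFun (catalecticant_mulVec_apolarCoeff f) ⟨i, by lia⟩
  rw [← hrow, aeval_shift_toPoly, Fin.sum_univ_four, mul_comm, mul_comm (apolarCoeff f 1),
    mul_comm (apolarCoeff f 2), mul_comm (apolarCoeff f 3)]
  rfl

/-- The coefficients of the binary cubic `∏ j, (b j * x - a j * y)`, whose roots are the points
`[a j : b j]`. -/
def rootCubicCoeff (a b : Fin 3 → ℝ) : Fin 4 → ℝ :=
  ![b 0 * b 1 * b 2, -(a 0 * b 1 * b 2 + b 0 * a 1 * b 2 + b 0 * b 1 * a 2),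
    a 0 * a 1 * b 2 + a 0 * b 1 * a 2 + b 0 * a 1 * a 2, -(a 0 * a 1 * a 2)]

lemma cubicDisc_rootCubicCoeff (l : ℝ) (a b : Fin 3 → ℝ) :
    cubicDisc (l * rootCubicCoeff a b 0) (l * rootCubicCoeff a b 1 / 3)
        (l * rootCubicCoeff a b 2 / 3) (l * rootCubicCoeff a b 3) =
      l ^ 4 * (projVandermonde b a).det ^ 2 / 27 := by
  rw [det_fin_three]
  simp only [cubicDisc, rootCubicCoeff, projVandermonde_apply, cons_val, Fin.coe_ofNat_eq_mod,
    Nat.zero_mod, Nat.one_mod, Nat.mod_succ, Fin.rev_zero, Fin.reduceLast, Fin.reduceRev]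
  ring

lemma signed_minor_rectVandermonde (a b : Fin 3 → ℝ) (i : Fin 4) :
    (-1) ^ i.val * ((rectVandermonde b a 4).submatrix id i.succAbove).det =
      (projVandermonde b a).det * rootCubicCoeff a b i := by
  rw [det_fin_three, det_fin_three]
  simp only [submatrix_apply, id, rectVandermonde_apply, projVandermonde_apply]
  fin_cases i <;> simp [rootCubicCoeff, Fin.succAbove, Fin.lt_def] <;> ring

lemma apolarCoeff_sum_lin_pow (c a b : Fin 3 → ℝ) (i : Fin 4) :
    apolarCoeff (∑ j, C (c j) * lin (a j) (b j) ^ 5) i =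
      (∏ j, c j) * (projVandermonde b a).det ^ 2 * rootCubicCoeff a b i := by
  rw [apolarCoeff, catalecticant_sum_lin_pow, submatrix_mul _ _ id id _ Function.bijective_id,
    submatrix_id_id, det_mul, det_mul, det_diagonal, det_transpose, mul_left_comm,
    signed_minor_rectVandermonde, projVandermonde]
  ring

lemma I12_sum_lin_pow (c a b : Fin 3 → ℝ) :
    I12 (∑ j, C (c j) * lin (a j) (b j) ^ 5) =
      (∏ j, c j) ^ 4 * (projVandermonde b a).det ^ 10 / 27 := by
  rw [I12, apolarCoeff_sum_lin_pow, apolarCoeff_sum_lin_pow, apolarCoeff_sum_lin_pow,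
    apolarCoeff_sum_lin_pow, cubicDisc_rootCubicCoeff]
  ring

namespace HasDecomp

variable {f : MvPolynomial (Fin 2) ℝ}

lemma I12_nonneg (h : HasDecomp f 5 3) : 0 ≤ I12 f := by
  obtain ⟨c, a, b, -, rfl⟩ := h
  rw [I12_sum_lin_pow]
  positivity

lemma I12_eq_zero (h : HasDecomp f 5 2) : I12 f = 0 := by
  obtain ⟨c, a, b, -, rfl⟩ := h
  have hcons := I12_sum_lin_pow (Fin.cons 0 c) (Fin.cons 1 a) (Fin.cons 0 b)
  rw [Fin.sum_univ_succ] at hcons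
  simpa [Fin.prod_univ_succ] using hcons

lemma I12_pos (h : HasDecomp f 5 3) (h2 : ¬HasDecomp f 5 2) : 0 < I12 f := by
  obtain ⟨c, a, b, hab, rfl⟩ := h
  have hc : ∏ j, c j ≠ 0 := Finset.prod_ne_zero_iff.2 fun j _ hj =>
    h2 (hasDecomp_sum_of_coeff_eq_zero hab hj)
  have hdet : (projVandermonde b a).det ≠ 0 := by
    rw [det_projVandermonde]
    refine Finset.prod_ne_zero_iff.2 fun i _ => Finset.prod_ne_zero_iff.2 fun j hj hzero => h2 ?_
    exact hasDecomp_sum_of_det_eq_zero hab (Finset.mem_Ioi.1 hj).ne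
      (by linear_combination hzero)
  rw [I12_sum_lin_pow]
  positivity

end HasDecomp

lemma realRank_eq_three_iff {f : MvPolynomial (Fin 2) ℝ} (hf : f.IsHomogeneous 5) :
    realRank f 5 = 3 ↔ 0 < I12 f := by
  rw [realRank_eq_succ_iff]
  exact ⟨fun h => h.1.I12_pos h.2,
    fun h => ⟨hasDecomp_three_of_I12_pos hf h, fun h2 => h.ne' h2.I12_eq_zero⟩⟩

end Catalecticant

section HankelMinors

/-- The syzygy `G ^ 2 + 4 * H ^ 3 = - c₀ ^ 2 * Δ` between the covariants of a binary cubic. -/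
lemma cubicDisc_neg_of_hessian_pos {c₀ c₁ c₂ c₃ : ℝ} (h : 0 < c₀ * c₂ - c₁ ^ 2) :
    cubicDisc c₀ c₁ c₂ c₃ < 0 := by
  have hsyzygy : c₀ ^ 2 * cubicDisc c₀ c₁ c₂ c₃ =
      -((c₀ ^ 2 * c₃ - 3 * c₀ * c₁ * c₂ + 2 * c₁ ^ 3) ^ 2 + 4 * (c₀ * c₂ - c₁ ^ 2) ^ 3) := by
    rw [cubicDisc]
    ring
  refine neg_of_mul_neg_right (a := c₀ ^ 2) ?_ (sq_nonneg c₀)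
  rw [hsyzygy]
  exact neg_neg_of_pos (by positivity)

lemma cubicDisc_reverse (c₀ c₁ c₂ c₃ : ℝ) :
    cubicDisc c₃ c₂ c₁ c₀ = cubicDisc c₀ c₁ c₂ c₃ := by
  rw [cubicDisc, cubicDisc]
  ring

lemma cubicDisc_neg_of_hessian_add_pos {c₀ c₁ c₂ c₃ : ℝ}
    (h : 0 < (c₁ * c₃ - c₂ ^ 2) + (c₀ * c₂ - c₁ ^ 2)) : cubicDisc c₀ c₁ c₂ c₃ < 0 := by
  rcases lt_or_ge 0 (c₀ * c₂ - c₁ ^ 2) with hpos | hle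
  · exact cubicDisc_neg_of_hessian_pos hpos
  · rw [← cubicDisc_reverse]
    exact cubicDisc_neg_of_hessian_pos (by linarith)

/-- The degree is `4` because the root `∞` does not show in the dehomogenized product. -/
lemma hasDistinctRealRoots_neg_X_mul_quadratic {a b c : ℝ} (ha : a ≠ 0) (hc : c ≠ 0)
    (h : 0 < discrim a b c) : HasDistinctRealRoots (-Polynomial.X * quadratic a b c) 4 := by
  have hinf : HasDistinctRealRoots (quadratic a b c) 3 := by
    have hmul := (hasDistinctRealRoots_quadratic h).apolarLin_mul (p := 0) (q := 1) (by simp)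
      (by rw [eval_homogenize_quadratic]; simpa using hc)
    simpa [apolarLin] using hmul
  have hmul := hinf.apolarLin_mul (p := 1) (q := 0) (by simp) (by simpa [quadratic] using ha)
  simpa [apolarLin] using hmul

lemma aeval_shift_neg_X_mul_quadratic (a b c : ℝ) (α : ℕ → ℝ) (i : ℕ) :
    Polynomial.aeval (shift ℝ) (-Polynomial.X * quadratic a b c) α i =
      -(a * α (i + 1) + b * α (i + 2) + c * α (i + 3)) := by
  simp [quadratic, shift_apply, shift_pow_apply, add_assoc, add_comm, add_left_comm]

/-- The quadratic is the Hessian of the cubic with coefficients `α 1, …, α 4`; the two extra roots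
`0` and `∞` absorb the extreme coefficients `α 0` and `α 5`. -/
lemma hasDecomp_four_of_hankel_minors {α : ℕ → ℝ} (h₀ : α 2 * α 4 - α 3 ^ 2 ≠ 0)
    (h₁ : α 1 * α 3 - α 2 ^ 2 ≠ 0)
    (hpos : 0 < (α 2 * α 4 - α 3 ^ 2) + (α 1 * α 3 - α 2 ^ 2)) :
    HasDecomp (binaryForm 5 α) 5 4 := by
  have hdisc : 0 < discrim (α 2 * α 4 - α 3 ^ 2) (α 2 * α 3 - α 1 * α 4)
      (α 1 * α 3 - α 2 ^ 2) := by
    have hneg := cubicDisc_neg_of_hessian_add_pos hpos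
    rw [cubicDisc] at hneg
    rw [discrim]
    linarith
  refine hasDecomp_binaryForm (hasDistinctRealRoots_neg_X_mul_quadratic h₀ h₁ hdisc) fun i hi => ?_
  rw [aeval_shift_neg_X_mul_quadratic]
  have hi : i = 0 ∨ i = 1 := by lia
  rcases hi with rfl | rfl <;> ring

end HankelMinors

section CircularForm

open Complex ComplexConjugate Filter Topology

/-- The coefficients of the real quintic `Re (a * z ^ 4 * z̄ + b * z ^ 3 * z̄ ^ 2)`, where
`z = x + y * I`. These are the real quintics vanishing on the isotropic line `z = 0`. -/
noncomputable def circMoment (a b : ℂ) : ℕ → ℝ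
  | 0 => a.re + b.re
  | 1 => -(3 * a.im + b.im) / 5
  | 2 => (b.re - a.re) / 5
  | 3 => -(a.im + b.im) / 5
  | 4 => (b.re - 3 * a.re) / 5
  | 5 => a.im - b.im
  | _ => 0

lemma binaryForm_circMoment (a b : ℂ) :
    binaryForm 5 (circMoment a b) =
      (C a.re + C b.re) * X 0 ^ 5 - (3 * C a.im + C b.im) * (X 0 ^ 4 * X 1) +
        2 * (C b.re - C a.re) * (X 0 ^ 3 * X 1 ^ 2) -
        2 * (C a.im + C b.im) * (X 0 ^ 2 * X 1 ^ 3) +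
        (C b.re - 3 * C a.re) * (X 0 * X 1 ^ 4) + (C a.im - C b.im) * X 1 ^ 5 := by
  have h1 : (5 : ℝ) * (-(3 * a.im + b.im) / 5) = -(3 * a.im + b.im) := by ring
  have h2 : (10 : ℝ) * ((b.re - a.re) / 5) = 2 * (b.re - a.re) := by ring
  have h3 : (10 : ℝ) * (-(a.im + b.im) / 5) = -(2 * (a.im + b.im)) := by ring
  have h4 : (5 : ℝ) * ((b.re - 3 * a.re) / 5) = b.re - 3 * a.re := by ring
  simp only [binaryForm, Finset.sum_range_succ, Finset.sum_range_zero, circMoment,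
    show Nat.choose 5 2 = 10 from rfl, show Nat.choose 5 3 = 10 from rfl,
    show Nat.choose 5 4 = 5 from rfl, Nat.choose_zero_right, Nat.choose_one_right,
    Nat.choose_self, Nat.cast_one, Nat.cast_ofNat, one_mul, h1, h2, h3, h4]
  simp only [map_neg, map_add, map_sub, map_mul, map_ofNat]
  ring

/-- Multiplying `a * z ^ 4 * z̄` and `b * z ^ 3 * z̄ ^ 2` by these factors amounts to replacing
`z` by `u * z`. -/
lemma binaryForm_circMoment_mul (a b u : ℂ) :
    binaryForm 5 (circMoment (a * (u ^ 4 * conj u)) (b * (u ^ 3 * conj u ^ 2))) =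
      aeval ![lin u.re (-u.im), lin u.im u.re] (binaryForm 5 (circMoment a b)) := by
  simp only [binaryForm_circMoment, lin, pow_succ, pow_zero, one_mul, mul_re, mul_im, conj_re,
    conj_im, map_add, map_sub, map_mul, map_neg, map_ofNat, aeval_C, aeval_X, algebraMap_eq,
    Matrix.cons_val_zero, Matrix.cons_val_one]
  ring

lemma HasDecomp.of_circMoment_mul {a b u : ℂ} {r : ℕ} (hu : u ≠ 0)
    (h : HasDecomp (binaryForm 5
      (circMoment (a * (u ^ 4 * conj u)) (b * (u ^ 3 * conj u ^ 2)))) 5 r) :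
    HasDecomp (binaryForm 5 (circMoment a b)) 5 r := by
  have hdet : (u⁻¹).re * (u⁻¹).re - (u⁻¹).im * -(u⁻¹).im ≠ 0 := by
    have hnorm := normSq_pos.2 (inv_ne_zero hu)
    rw [normSq_apply] at hnorm
    linarith
  have hconj : conj u ≠ 0 := (map_ne_zero _).2 hu
  have hrot := h.aeval_lin hdet
  rw [← binaryForm_circMoment_mul, map_inv₀] at hrot
  convert hrot using 3 <;> field_simp

lemma exists_ne_zero_and_add_pos_of_analyticOnNhd {g : ℝ → ℝ} (hg : AnalyticOnNhd ℝ g Set.univ)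
    {c x : ℝ} (hx : 0 < g x + g (x + c)) :
    ∃ y, g y ≠ 0 ∧ g (y + c) ≠ 0 ∧ 0 < g y + g (y + c) := by
  have hne : ∃ z, g z ≠ 0 := by
    by_contra! hzero
    simp [hzero] at hx
  have hev (y : ℝ) : ∀ᶠ z in 𝓝[≠] y, g z ≠ 0 := by
    by_contra hfreq
    obtain ⟨z, hz⟩ := hne
    exact hz (congrFun (hg.eq_of_frequently_eq analyticOnNhd_const hfreq) z)
  have hshift : Tendsto (· + c) (𝓝[≠] x) (𝓝[≠] (x + c)) :=
    (continuous_add_const c).continuousAt.tendsto.inf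
      (tendsto_principal_principal.2 fun _ hz => (add_left_injective c).ne hz)
  have hcont : Continuous g := continuous_iff_continuousAt.2 fun z => (hg z trivial).continuousAt
  have hpos : ∀ᶠ z in 𝓝[≠] x, 0 < g z + g (z + c) :=
    ((show Continuous fun z => g z + g (z + c) by fun_prop).continuousAt.eventually_const_lt
      hx).filter_mono nhdsWithin_le_nhds
  exact ((hev x).and ((hshift.eventually (hev (x + c))).and hpos)).exists

/-- The Hankel minor `α 2 * α 4 - α 3 ^ 2` of the quintic `circMoment a b` rotated by `θ`. -/
noncomputable def rotatedMinor (a b : ℂ) (θ : ℝ) : ℝ :=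
  let α := circMoment (a * exp ((3 * θ : ℝ) * I)) (b * exp (θ * I))
  α 2 * α 4 - α 3 ^ 2

lemma analyticOnNhd_rotatedMinor (a b : ℂ) : AnalyticOnNhd ℝ (rotatedMinor a b) Set.univ := by
  refine ContDiff.analyticOnNhd ?_
  unfold rotatedMinor
  simp only [circMoment, mul_re, mul_im, exp_ofReal_mul_I_re, exp_ofReal_mul_I_im]
  fun_prop

lemma rotatedMinor_add_pi_div_two (a b : ℂ) (θ : ℝ) :
    let α := circMoment (a * exp ((3 * θ : ℝ) * I)) (b * exp (θ * I))
    rotatedMinor a b (θ + Real.pi / 2) = α 1 * α 3 - α 2 ^ 2 := by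
  have harg : 3 * (θ + Real.pi / 2) = 3 * θ + Real.pi / 2 + Real.pi := by ring
  simp only [rotatedMinor, circMoment, mul_re, mul_im, exp_ofReal_mul_I_re, exp_ofReal_mul_I_im,
    harg, Real.cos_add_pi, Real.sin_add_pi, Real.cos_add_pi_div_two, Real.sin_add_pi_div_two]
  ring

lemma rotatedMinor_add_rotatedMinor (a b : ℂ) (θ : ℝ) :
    rotatedMinor a b θ + rotatedMinor a b (θ + Real.pi / 2) =
      2 / 25 * (normSq a - (a * b * exp ((4 * θ : ℝ) * I)).re) := by
  have hexp : exp ((4 * θ : ℝ) * I) = exp ((3 * θ : ℝ) * I) * exp (θ * I) := by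
    rw [← Complex.exp_add]
    push_cast
    ring_nf
  have hnorm : normSq a = normSq (a * exp ((3 * θ : ℝ) * I)) := by
    rw [normSq_mul, normSq_eq_norm_sq (exp _), norm_exp_ofReal_mul_I, one_pow, mul_one]
  rw [rotatedMinor_add_pi_div_two, rotatedMinor, hexp, hnorm, mul_mul_mul_comm, normSq_apply,
    mul_re (a * _)]
  simp only [circMoment]
  ring

/-- The sum of the two minors has positive mean in `θ`; two values of `θ` suffice to see it. -/
lemma exists_rotatedMinor_add_pos {a : ℂ} (ha : a ≠ 0) (b : ℂ) :
    ∃ θ, 0 < rotatedMinor a b θ + rotatedMinor a b (θ + Real.pi / 2) := by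
  have hnorm : 0 < normSq a := normSq_pos.2 ha
  rcases le_total (a * b).re 0 with hle | hge
  · refine ⟨0, ?_⟩
    rw [rotatedMinor_add_rotatedMinor]
    simp only [mul_zero, ofReal_zero, zero_mul, Complex.exp_zero, mul_one]
    linarith
  · refine ⟨Real.pi / 4, ?_⟩
    rw [rotatedMinor_add_rotatedMinor, mul_div_cancel₀ _ four_ne_zero, exp_pi_mul_I, mul_neg_one,
      neg_re]
    linarith

lemma hasDecomp_circMoment {a : ℂ} (ha : a ≠ 0) (b : ℂ) :
    HasDecomp (binaryForm 5 (circMoment a b)) 5 4 := by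
  obtain ⟨_, hpos⟩ := exists_rotatedMinor_add_pos ha b
  obtain ⟨θ, h₀, h₁, hpos⟩ :=
    exists_ne_zero_and_add_pos_of_analyticOnNhd (analyticOnNhd_rotatedMinor a b) hpos
  rw [rotatedMinor_add_pi_div_two] at h₁ hpos
  have hconj : exp (θ * I) * conj (exp (θ * I)) = 1 := by
    rw [mul_conj, normSq_eq_norm_sq, norm_exp_ofReal_mul_I]
    simp
  have hcube : exp (θ * I) ^ 4 * conj (exp (θ * I)) = exp ((3 * θ : ℝ) * I) := by
    rw [pow_succ, mul_assoc, hconj, mul_one, ← Complex.exp_nat_mul]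
    push_cast
    ring_nf
  have hone : exp (θ * I) ^ 3 * conj (exp (θ * I)) ^ 2 = exp (θ * I) := by
    linear_combination exp (θ * I) * (exp (θ * I) * conj (exp (θ * I)) + 1) * hconj
  refine HasDecomp.of_circMoment_mul (u := exp (θ * I)) (Complex.exp_ne_zero _) ?_
  rw [hcube, hone]
  exact hasDecomp_four_of_hankel_minors h₀ h₁ hpos

end CircularForm

section Dehomogenization

variable {f : MvPolynomial (Fin 2) ℝ} {d : ℕ} {ζ : ℂ}

/-- The dehomogenization `f(x, 1)` of a binary form. -/
noncomputable def dehom (f : MvPolynomial (Fin 2) ℝ) : Polynomial ℝ :=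
  aeval ![Polynomial.X, 1] f

lemma homogenize_dehom (hf : f.IsHomogeneous d) : (dehom f).homogenize d = f :=
  Polynomial.homogenize_eq_of_isHomogeneous hf rfl

lemma natDegree_dehom_le (hf : f.IsHomogeneous d) : (dehom f).natDegree ≤ d := by
  rw [dehom, ← mul_one d]
  exact aeval_natDegree_le f hf.totalDegree_le _ (by simp [Fin.forall_fin_two])

lemma dehom_lin (a b : ℝ) :
    dehom (lin a b) = Polynomial.C a * Polynomial.X + Polynomial.C b := by
  simp [dehom, lin]

lemma dehom_aeval_lin (f : MvPolynomial (Fin 2) ℝ) (p q : ℝ) :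
    dehom (aeval ![lin p q, lin 0 1] f) =
      (dehom f).comp (Polynomial.C p * Polynomial.X + Polynomial.C q) := by
  rw [Polynomial.comp_eq_aeval, dehom, dehom, comp_aeval_apply, comp_aeval_apply]
  congr 2
  ext i : 1
  fin_cases i
  · simpa [dehom] using dehom_lin p q
  · simpa [dehom] using dehom_lin 0 1

lemma isHomogeneous_lin (a b : ℝ) : (lin a b).IsHomogeneous 1 :=
  (isHomogeneous_C_mul_X a 0).add (isHomogeneous_C_mul_X b 1)

lemma HasDecomp.of_aeval_lin {p q : ℝ} {r : ℕ} (hp : p ≠ 0)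
    (h : HasDecomp (aeval ![lin p q, lin 0 1] f) d r) : HasDecomp f d r := by
  have hinv : aeval ![lin p⁻¹ (-(p⁻¹ * q)), lin 0 1] (aeval ![lin p q, lin 0 1] f) = f := by
    have hX : (fun i => aeval ![lin p⁻¹ (-(p⁻¹ * q)), lin 0 1] (![lin p q, lin 0 1] i)) = X := by
      refine funext (Fin.forall_fin_two.2 ⟨?_, ?_⟩)
      · have hC : (C p * C p⁻¹ : MvPolynomial (Fin 2) ℝ) = 1 := by
          rw [← C_mul, mul_inv_cancel₀ hp, C_1]
        simp only [Matrix.cons_val_zero, lin, map_add, map_mul, algHom_C, algebraMap_eq, aeval_X,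
          Matrix.cons_val_one, C_neg, C_0, C_1]
        linear_combination (X 0 - C q * X 1) * hC
      · simp [lin]
    rw [comp_aeval_apply, hX, aeval_X_left_apply]
  rw [← hinv]
  exact h.aeval_lin (by simpa using hp)

/-- A power of a single linear form has no simple root. -/
lemma HasDecomp.aeval_derivative_dehom_eq_zero (h : HasDecomp f d 1) (hd : 2 ≤ d)
    (hroot : Polynomial.aeval ζ (dehom f) = 0) :
    Polynomial.aeval ζ (Polynomial.derivative (dehom f)) = 0 := by
  obtain ⟨c, a, b, -, rfl⟩ := h
  obtain ⟨n, rfl⟩ := Nat.exists_eq_add_of_le' hd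
  have hpow : dehom (∑ j, C (c j) * lin (a j) (b j) ^ (n + 2)) =
      Polynomial.C (c 0) * dehom (lin (a 0) (b 0)) ^ (n + 2) := by
    simp [dehom]
  rw [hpow, map_mul, map_pow, mul_eq_zero, pow_eq_zero_iff (by lia)] at hroot
  rw [hpow, Polynomial.derivative_C_mul, Polynomial.derivative_pow_succ, map_mul, map_mul, map_mul,
    map_pow]
  rcases hroot with hzero | hzero <;> simp [hzero]

end Dehomogenization

section SimpleNonrealRoot

open Complex

variable {f : MvPolynomial (Fin 2) ℝ} {ζ : ℂ}

lemma dehom_binaryForm_five (α : ℕ → ℝ) :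
    dehom (binaryForm 5 α) = Polynomial.C (α 0) * Polynomial.X ^ 5 +
      Polynomial.C (5 * α 1) * Polynomial.X ^ 4 + Polynomial.C (10 * α 2) * Polynomial.X ^ 3 +
      Polynomial.C (10 * α 3) * Polynomial.X ^ 2 + Polynomial.C (5 * α 4) * Polynomial.X +
      Polynomial.C (α 5) := by
  simp [dehom, binaryForm, Finset.sum_range_succ, show Nat.choose 5 2 = 10 from rfl,
    show Nat.choose 5 3 = 10 from rfl, ← map_ofNat Polynomial.C]

lemma exists_binaryForm_eq_circMoment {α : ℕ → ℝ}
    (hroot : Polynomial.aeval I (dehom (binaryForm 5 α)) = 0) :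
    ∃ b, binaryForm 5 α = binaryForm 5 (circMoment
      (Polynomial.aeval I (Polynomial.derivative (dehom (binaryForm 5 α))) / 8) b) := by
  refine ⟨⟨(15 * α 2 - 5 * α 4) / 2, (5 * α 1 - 15 * α 3) / 2⟩, binaryForm_congr fun i hi => ?_⟩
  rw [dehom_binaryForm_five] at hroot ⊢
  have hre := congrArg re hroot
  have him := congrArg im hroot
  simp only [map_add, map_mul, Polynomial.aeval_C, Polynomial.aeval_X, coe_algebraMap, pow_succ,
    pow_zero, one_mul, add_re, add_im, mul_re, mul_im, I_re, I_im, ofReal_re, ofReal_im, zero_re,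
    zero_im] at hre him
  interval_cases i <;> simp [circMoment, pow_succ] <;> linarith

lemma hasDecomp_four_of_simple_root_I (hf : f.IsHomogeneous 5)
    (hroot : Polynomial.aeval I (dehom f) = 0)
    (hsimple : Polynomial.aeval I (Polynomial.derivative (dehom f)) ≠ 0) :
    HasDecomp f 5 4 := by
  rw [← binaryForm_quinticCoeff hf] at hroot hsimple ⊢
  obtain ⟨b, hb⟩ := exists_binaryForm_eq_circMoment hroot
  rw [hb]
  exact hasDecomp_circMoment (div_ne_zero hsimple (by norm_num)) b

lemma hasDecomp_four_of_simple_nonreal_root (hf : f.IsHomogeneous 5) (hζ : ζ.im ≠ 0)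
    (hroot : Polynomial.aeval ζ (dehom f) = 0)
    (hsimple : Polynomial.aeval ζ (Polynomial.derivative (dehom f)) ≠ 0) :
    HasDecomp f 5 4 := by
  have hI : Polynomial.aeval I
      (Polynomial.C ζ.im * Polynomial.X + Polynomial.C ζ.re : Polynomial ℝ) = ζ := by
    simp [add_comm]
  have hmoved : HasDecomp (aeval ![lin ζ.im ζ.re, lin 0 1] f) 5 4 := by
    refine hasDecomp_four_of_simple_root_I ?_ ?_ ?_
    · exact hf.aeval ![lin ζ.im ζ.re, lin 0 1] (n := 1)
        (Fin.forall_fin_two.2 ⟨isHomogeneous_lin _ _, isHomogeneous_lin _ _⟩)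
    · rw [dehom_aeval_lin, Polynomial.aeval_comp, hI, hroot]
    · rw [dehom_aeval_lin, Polynomial.derivative_comp, map_mul, Polynomial.aeval_comp, hI]
      exact mul_ne_zero (by simpa using hζ) hsimple
  exact hmoved.of_aeval_lin hζ

end SimpleNonrealRoot

section Squarefree

variable {f : MvPolynomial (Fin 2) ℝ} {d : ℕ}

lemma SquarefreeC.degree_eq_zero_of_mul_self_dvd (hsf : SquarefreeC f)
    {u : MvPolynomial (Fin 2) ℝ} {k : ℕ} (hu : u.IsHomogeneous k) (hdvd : u * u ∣ f) : k = 0 := by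
  have hunit : IsUnit (constantCoeff (map (algebraMap ℝ ℂ) u)) :=
    (hsf _ (by rw [← map_mul]; exact map_dvd _ hdvd)).map _
  by_contra hk
  refine hunit.ne_zero ?_
  rw [constantCoeff_map, constantCoeff_eq, hu.coeff_eq_zero (by simpa using Ne.symm hk), map_zero]

lemma SquarefreeC.squarefree_dehom (hsf : SquarefreeC f) (hf : f.IsHomogeneous d) :
    Squarefree (dehom f) := by
  have hne : dehom f ≠ 0 := fun hzero => hsf.ne_zero <| by
    rw [← homogenize_dehom hf, hzero, Polynomial.homogenize_zero, map_zero]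
  rintro u ⟨v, huv⟩
  have hu : u ≠ 0 := by
    rintro rfl
    simp [huv] at hne
  have hv : v ≠ 0 := by
    rintro rfl
    simp [huv] at hne
  have hdeg := natDegree_dehom_le hf
  rw [huv, Polynomial.natDegree_mul (mul_ne_zero hu hu) hv, Polynomial.natDegree_mul hu hu] at hdeg
  have hfactor := homogenize_dehom hf
  rw [huv, ← Nat.add_sub_of_le ((Nat.le_add_right _ _).trans hdeg),
    Polynomial.homogenize_mul _ _ Polynomial.natDegree_mul_le (by lia),
    Polynomial.homogenize_mul _ _ le_rfl le_rfl] at hfactor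
  exact Polynomial.isUnit_iff_degree_eq_zero.2 <| (Polynomial.degree_eq_iff_natDegree_eq hu).2 <|
    hsf.degree_eq_zero_of_mul_self_dvd (Polynomial.isHomogeneous_homogenize u) ⟨_, hfactor.symm⟩

lemma SquarefreeC.le_natDegree_dehom_add_one (hsf : SquarefreeC f) (hf : f.IsHomogeneous d) :
    d ≤ (dehom f).natDegree + 1 := by
  by_contra! hlt
  have hfactor := homogenize_dehom hf
  rw [← Nat.sub_add_cancel (show 2 ≤ d by lia), ← mul_one (dehom f),
    Polynomial.homogenize_mul _ _ (by lia) (by simp), Polynomial.homogenize_one] at hfactor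
  refine one_ne_zero (hsf.degree_eq_zero_of_mul_self_dvd (isHomogeneous_X ℝ (1 : Fin 2)) ?_)
  exact ⟨_, by rw [← hfactor]; ring⟩

lemma mk_mem_projRoots (hf : f.IsHomogeneous d) {r : ℝ} (hr : (dehom f).IsRoot r)
    (hr0 : ![r, 1] ≠ 0) : Projectivization.mk ℝ ![r, 1] hr0 ∈ projRoots f := by
  obtain ⟨s, hs⟩ := Projectivization.exists_smul_eq_mk_rep ℝ ![r, 1] hr0
  rw [projRoots, Set.mem_ofPred_eq, ← hs, ← homogenize_dehom hf,
    Polynomial.eval_homogenize (natDegree_dehom_le hf) _ (by simp [Units.smul_def])]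
  simp [Units.smul_def, hr.eq_zero]

lemma card_roots_dehom_le_ncard_projRoots (hf : f.IsHomogeneous d) (hfin : (projRoots f).Finite) :
    (dehom f).roots.toFinset.card ≤ (projRoots f).ncard := by
  have hne (r : ℝ) : (![r, 1] : Fin 2 → ℝ) ≠ 0 := fun h => by simpa using congrFun h 1
  rw [← Set.ncard_coe_finset]
  refine Set.ncard_le_ncard_of_injOn (fun r => Projectivization.mk ℝ ![r, 1] (hne r))
    (fun r hr => mk_mem_projRoots hf (Polynomial.isRoot_of_mem_roots (by simpa using hr)) _)
    (fun r _ s _ hrs => ?_) hfin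
  obtain ⟨t, ht⟩ := (Projectivization.mk_eq_mk_iff' ℝ _ _ _ _).1 hrs
  have ht1 : t = 1 := by simpa using congrFun ht 1
  simpa [ht1] using (congrFun ht 0).symm

lemma exists_simple_nonreal_root (hf : f.IsHomogeneous d) (hsf : SquarefreeC f)
    (hfin : (projRoots f).Finite) (hcard : (projRoots f).ncard + 1 < d) :
    ∃ ζ : ℂ, ζ.im ≠ 0 ∧ Polynomial.aeval ζ (dehom f) = 0 ∧
      Polynomial.aeval ζ (Polynomial.derivative (dehom f)) ≠ 0 := by
  have hsep := PerfectField.separable_iff_squarefree.2 (hsf.squarefree_dehom hf)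
  have hnsplits : ¬(dehom f).Splits := fun hsplits => by
    have hroots := card_roots_dehom_le_ncard_projRoots hf hfin
    rw [Multiset.toFinset_card_of_nodup (Polynomial.nodup_roots hsep),
      ← hsplits.natDegree_eq_card_roots] at hroots
    have hdeg := hsf.le_natDegree_dehom_add_one hf
    lia
  obtain ⟨ζ, hroot, hζ⟩ : ∃ ζ : ℂ, Polynomial.aeval ζ (dehom f) = 0 ∧ ζ.im ≠ 0 := by
    by_contra! hreal
    refine hnsplits (.of_splits_map (algebraMap ℝ ℂ) (IsAlgClosed.splits _) fun ζ hζ =>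
      ⟨ζ.re, Complex.ext rfl (hreal ζ ?_).symm⟩)
    rw [← Polynomial.eval_map_algebraMap]
    exact Polynomial.isRoot_of_mem_roots hζ
  exact ⟨ζ, hζ, hroot, hsep.aeval_derivative_ne_zero hroot⟩

end Squarefree

theorem stmt15_general (f : MvPolynomial (Fin 2) ℝ) (hf : f.IsHomogeneous 5) {ζ : ℂ}
    (hζ : ζ.im ≠ 0) (hroot : Polynomial.aeval ζ (dehom f) = 0)
    (hsimple : Polynomial.aeval ζ (Polynomial.derivative (dehom f)) ≠ 0) :
    (2 ≤ realRank f 5 ∧ realRank f 5 ≤ 4) ∧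
    ((catalecticant f).rank = 3 → realRank f 5 = 3 ∨ realRank f 5 = 4) ∧
    (realRank f 5 = 3 ↔ 0 < I12 f) ∧
    (I12 f < 0 → realRank f 5 = 4) := by
  have h4 : HasDecomp f 5 4 := hasDecomp_four_of_simple_nonreal_root hf hζ hroot hsimple
  have h1 : ¬HasDecomp f 5 1 := fun h =>
    hsimple (h.aeval_derivative_dehom_eq_zero (by norm_num) hroot)
  refine ⟨⟨lt_realRank h4 h1, realRank_le h4⟩, fun hrank => ?_, realRank_eq_three_iff hf,
    fun hI => realRank_eq_succ_iff.2 ⟨h4, fun h3 => hI.not_ge h3.I12_nonneg⟩⟩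
  have hge : 2 < realRank f 5 := lt_realRank h4 fun h2 => by
    have hle := h2.catalecticant_rank_le
    lia
  have hle : realRank f 5 ≤ 4 := realRank_le h4
  lia

/-- A real binary quintic with distinct complex roots and exactly one or exactly three real
roots has real rank at most 4 and at least 2; if its catalecticant matrix has maximal rank, the
real rank is 3 or 4. The rank is 3 exactly when `I12 f > 0`, and it is 4 when `I12 f < 0`. -/
theorem stmt15 (f : MvPolynomial (Fin 2) ℝ) (hf : f.IsHomogeneous 5)
    (hsf : SquarefreeC f) (hroots : (projRoots f).ncard = 1 ∨ (projRoots f).ncard = 3) :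
    (2 ≤ realRank f 5 ∧ realRank f 5 ≤ 4) ∧
    ((catalecticant f).rank = 3 → realRank f 5 = 3 ∨ realRank f 5 = 4) ∧
    (realRank f 5 = 3 ↔ 0 < I12 f) ∧
    (I12 f < 0 → realRank f 5 = 4) := by
  obtain ⟨ζ, hζ, hroot, hsimple⟩ := exists_simple_nonreal_root hf hsf
    (Set.finite_of_ncard_ne_zero (by lia)) (by lia)
  exact stmt15_general f hf hζ hroot hsimple
end
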